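/- arXiv:1511.06632 — 3 statements merged into one kernel-verified Lean document; each statement's English description precedes it below -/
import Mathlib

section
/- Let N ≥ 2 be an integer, p > 1, and let f, F > 0 satisfy f^p ≤ F. Then for every κ ∈ (0,1] and every nonnegative measurable φ on [0,1) with ∫ φ dμ = f and ∫ φ^p dμ = F, one has sup { ∫_E (M_N φ)^p dμ : E ⊆ [0,1) measurable, μ(E) = κ } ≥ min { κ·u^p + ((N^p − 1)/(N^p − N))·(F − u^{p−1} f) : f ≤ u ≤ min((F/f)^{1/(p−1)}, f/κ) }. -/
open MeasureTheory Set Filter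

/-- The `N`-adic interval `[k/N^m, (k+1)/N^m)` at level `m`. -/
def adicItv (N m k : ℕ) : Set ℝ :=
  Set.Ico ((k : ℝ) / (N : ℝ) ^ m) (((k : ℝ) + 1) / (N : ℝ) ^ m)

/-- The average `(1/μ(I)) ∫_I |φ| dμ` of `φ` over the `N`-adic interval at level `m`, index `k`
(its measure is `N^{-m}`). -/
noncomputable def adicAvg (N : ℕ) (φ : ℝ → ℝ) (m k : ℕ) : ℝ :=
  (N : ℝ) ^ m * ∫ y in adicItv N m k, |φ y|

/-- The `N`-adic maximal operator on `[0,1)`: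
`M_N φ(x) = sup { (1/μ(I)) ∫_I |φ| dμ : x ∈ I, I an N-adic interval }`. -/
noncomputable def adicMax (N : ℕ) (φ : ℝ → ℝ) (x : ℝ) : ℝ :=
  sSup {r : ℝ | ∃ m k : ℕ, k < N ^ m ∧ x ∈ adicItv N m k ∧ r = adicAvg N φ m k}

/-- `sup { ∫_E (M_N φ)^p dμ : E ⊆ [0,1) measurable, μ(E) = κ }`. -/
noncomputable def supMeas (N : ℕ) (p κ : ℝ) (φ : ℝ → ℝ) : ℝ :=
  sSup {z : ℝ | ∃ E : Set ℝ, MeasurableSet E ∧ E ⊆ Set.Ico (0:ℝ) 1 ∧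
    volume E = ENNReal.ofReal κ ∧ z = ∫ x in E, adicMax N φ x ^ p}


noncomputable def fl (N n : ℕ) (x : ℝ) : ℕ := ⌊(N:ℝ)^n * x⌋₊

noncomputable def afn (N : ℕ) (φ : ℝ → ℝ) (n : ℕ) (x : ℝ) : ℝ := adicAvg N φ n (fl N n x)

noncomputable def Sn (N : ℕ) (φ : ℝ → ℝ) (l : ℝ) : ℕ → ℝ → ℝ
  | 0, x => max l (afn N φ 0 x)
  | n+1, x => max (Sn N φ l n x) (afn N φ (n+1) x)

def Lev (N n : ℕ) (g : ℝ → ℝ) : Prop := ∃ G : ℕ → ℝ, g = fun x => G (fl N n x)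

lemma fl_meas (N n : ℕ) : Measurable (fl N n) := by
  unfold fl
  exact Nat.measurable_floor.comp (measurable_const.mul measurable_id)

lemma Lev.meas {N n : ℕ} {g : ℝ → ℝ} (h : Lev N n g) : Measurable g := by
  obtain ⟨G, rfl⟩ := h
  exact (measurable_from_top (f := G)).comp (fl_meas N n)

lemma fl_succ {N : ℕ} (hN : 2 ≤ N) (n : ℕ) (x : ℝ) : fl N n x = fl N (n+1) x / N := by
  unfold fl
  rw [← Nat.floor_div_natCast]
  congr 1
  have : (N:ℝ) ≠ 0 := by positivity
  field_simp
  ring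

lemma Lev.succ {N n : ℕ} (hN : 2 ≤ N) {g : ℝ → ℝ} (h : Lev N n g) : Lev N (n+1) g := by
  obtain ⟨G, rfl⟩ := h
  exact ⟨fun k => G (k / N), by funext x; rw [fl_succ hN]⟩

lemma Lev.comp {N n : ℕ} {g : ℝ → ℝ} (h : Lev N n g) (A : ℝ → ℝ) : Lev N n (fun x => A (g x)) := by
  obtain ⟨G, rfl⟩ := h
  exact ⟨fun k => A (G k), rfl⟩

lemma Lev.comp2 {N n : ℕ} {g h : ℝ → ℝ} (hg : Lev N n g) (hh : Lev N n h) (A : ℝ → ℝ → ℝ) :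
    Lev N n (fun x => A (g x) (h x)) := by
  obtain ⟨G, rfl⟩ := hg
  obtain ⟨H, rfl⟩ := hh
  exact ⟨fun k => A (G k) (H k), rfl⟩

lemma afn_lev (N : ℕ) (φ : ℝ → ℝ) (n : ℕ) : Lev N n (afn N φ n) := ⟨adicAvg N φ n, rfl⟩

lemma Sn_lev {N : ℕ} (hN : 2 ≤ N) (φ : ℝ → ℝ) (l : ℝ) (n : ℕ) : Lev N n (Sn N φ l n) := by
  induction n with
  | zero => exact (afn_lev N φ 0).comp (fun y => max l y)
  | succ n ih => exact (ih.succ hN).comp2 (afn_lev N φ (n+1)) max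

lemma mem_adic {N : ℕ} (hN : 2 ≤ N) (n k : ℕ) {x : ℝ} (hx : 0 ≤ x) :
    x ∈ adicItv N n k ↔ fl N n x = k := by
  have : (0:ℝ) < (N:ℝ)^n := by positivity
  unfold adicItv fl
  rw [Nat.floor_eq_iff (by positivity), mem_Ico, div_le_iff₀ this, lt_div_iff₀ this,
    mul_comm x]

lemma adic_nonneg {N n k : ℕ} {x : ℝ} (hx : x ∈ adicItv N n k) : 0 ≤ x :=
  le_trans (by positivity) hx.1

lemma adic_meas (N n k : ℕ) : MeasurableSet (adicItv N n k) := measurableSet_Ico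

lemma fl_lt {N : ℕ} (hN : 2 ≤ N) (n : ℕ) {x : ℝ} (hx : x ∈ Ico (0:ℝ) 1) : fl N n x < N^n := by
  have : (0:ℝ) < (N:ℝ)^n := by positivity
  unfold fl
  rw [Nat.floor_lt (mul_nonneg this.le hx.1)]
  push_cast
  nlinarith [hx.2]

lemma adic_sub {N : ℕ} (hN : 2 ≤ N) {n k : ℕ} (hk : k < N^n) : adicItv N n k ⊆ Ico (0:ℝ) 1 := by
  intro x hx
  refine ⟨adic_nonneg hx, lt_of_lt_of_le hx.2 ?_⟩
  have : (0:ℝ) < (N:ℝ)^n := by positivity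
  rw [div_le_one this]
  exact_mod_cast hk

lemma Ico_eq {N : ℕ} (hN : 2 ≤ N) (n : ℕ) :
    Ico (0:ℝ) 1 = ⋃ k ∈ Finset.range (N^n), adicItv N n k := by
  ext x
  simp only [mem_iUnion, Finset.mem_range, exists_prop]
  constructor
  · intro hx
    exact ⟨fl N n x, fl_lt hN n hx, (mem_adic hN n _ hx.1).2 rfl⟩
  · rintro ⟨k, hk, hx⟩
    exact adic_sub hN hk hx

lemma adic_disj {N : ℕ} (hN : 2 ≤ N) (n : ℕ) (s : Set ℕ) :
    s.Pairwise (Function.onFun Disjoint (adicItv N n)) := by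
  intro i _ j _ hij
  refine Set.disjoint_left.2 fun x hi hj => hij ?_
  have h0 := adic_nonneg hi
  rw [mem_adic hN n _ h0] at hi hj
  omega

lemma Lev.bdd {N n : ℕ} (hN : 2 ≤ N) {g : ℝ → ℝ} (h : Lev N n g) :
    ∃ C, ∀ x ∈ Ico (0:ℝ) 1, ‖g x‖ ≤ C := by
  obtain ⟨G, rfl⟩ := h
  refine ⟨∑ k ∈ Finset.range (N^n), ‖G k‖, fun x hx => ?_⟩
  exact Finset.single_le_sum (f := fun k => ‖G k‖) (fun _ _ => norm_nonneg _)
    (Finset.mem_range.2 (fl_lt hN n hx))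

noncomputable abbrev U : Measure ℝ := volume.restrict (Ico (0:ℝ) 1)

instance : IsProbabilityMeasure U := ⟨by simp [U]⟩

lemma ae_U {P : ℝ → Prop} (h : ∀ x ∈ Ico (0:ℝ) 1, P x) : ∀ᵐ x ∂U, P x :=
  (ae_restrict_iff' measurableSet_Ico).2 (Eventually.of_forall h)

lemma Lev.mul_int {N n : ℕ} (hN : 2 ≤ N) {g φ : ℝ → ℝ} (h : Lev N n g) (hφ : Integrable φ U) :
    Integrable (fun x => φ x * g x) U := by
  obtain ⟨C, hC⟩ := h.bdd hN
  exact hφ.mul_bdd (c := C) h.meas.aestronglyMeasurable (ae_U hC)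

lemma Lev.int {N n : ℕ} (hN : 2 ≤ N) {g : ℝ → ℝ} (h : Lev N n g) : Integrable g U := by
  simpa using h.mul_int hN (integrable_const (1:ℝ))

lemma int_afn {N n : ℕ} (hN : 2 ≤ N) {g φ : ℝ → ℝ} (h : Lev N n g) (hφ : Integrable φ U) :
    ∫ x, afn N φ n x * g x ∂U = ∫ x, |φ x| * g x ∂U := by
  have h1 : Integrable (fun x => afn N φ n x * g x) U :=
    ((afn_lev N φ n).comp2 h (fun a b => a * b)).int hN
  have h2 := h.mul_int hN hφ.abs
  unfold U at *
  rw [Ico_eq hN n] at *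
  rw [integral_biUnion_finset _ (fun k _ => adic_meas N n k) (adic_disj hN n _),
    integral_biUnion_finset _ (fun k _ => adic_meas N n k) (adic_disj hN n _)]
  · refine Finset.sum_congr rfl fun k hk => ?_
    obtain ⟨G, rfl⟩ := h
    have e1 : ∫ x in adicItv N n k, afn N φ n x * G (fl N n x)
        = ∫ x in adicItv N n k, adicAvg N φ n k * G k := by
      refine setIntegral_congr_fun (adic_meas _ _ _) fun x hx => ?_
      have := (mem_adic hN n k (adic_nonneg hx)).1 hx
      simp only [afn, this]
    have e2 : ∫ x in adicItv N n k, |φ x| * G (fl N n x)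
        = (∫ x in adicItv N n k, |φ x|) * G k := by
      rw [← integral_mul_const]
      refine setIntegral_congr_fun (adic_meas _ _ _) fun x hx => ?_
      have := (mem_adic hN n k (adic_nonneg hx)).1 hx
      simp only [this]
    rw [e1, e2, setIntegral_const]
    have hp : (0:ℝ) < (N:ℝ)^n := by positivity
    have hv : volume.real (adicItv N n k) = 1 / (N:ℝ)^n := by
      unfold adicItv
      rw [Real.volume_real_Ico_of_le (by gcongr; linarith)]
      ring
    rw [hv, adicAvg, smul_eq_mul]
    field_simp
  · exact fun k hk => h2.mono_measure (Measure.restrict_mono (subset_biUnion_of_mem (u := adicItv N n) hk) le_rfl)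
  · exact fun k hk => h1.mono_measure (Measure.restrict_mono (subset_biUnion_of_mem (u := adicItv N n) hk) le_rfl)

lemma afn_nonneg (N : ℕ) (φ : ℝ → ℝ) (n : ℕ) (x : ℝ) : 0 ≤ afn N φ n x := by
  unfold afn adicAvg
  have : 0 ≤ ∫ y in adicItv N n (fl N n x), |φ y| := integral_nonneg fun _ => abs_nonneg _
  positivity

lemma afn_succ_le {N : ℕ} (hN : 2 ≤ N) {φ : ℝ → ℝ} (hφ : Integrable φ U) (n : ℕ) {x : ℝ}
    (hx : x ∈ Ico (0:ℝ) 1) : afn N φ (n+1) x ≤ N * afn N φ n x := by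
  unfold afn adicAvg
  rw [pow_succ, mul_comm _ (N:ℝ), mul_assoc]
  have hsub : adicItv N (n+1) (fl N (n+1) x) ⊆ adicItv N n (fl N n x) := by
    intro y hy
    have h0 := adic_nonneg hy
    rw [mem_adic hN _ _ h0] at hy ⊢
    rw [fl_succ hN, hy, ← fl_succ hN]
  refine mul_le_mul_of_nonneg_left (mul_le_mul_of_nonneg_left ?_ (by positivity)) (by positivity)
  refine setIntegral_mono_set ?_ (Eventually.of_forall fun y => abs_nonneg (φ y)) hsub.eventuallyLE
  exact hφ.abs.mono_measure (Measure.restrict_mono (adic_sub hN (fl_lt hN n hx)) le_rfl)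

lemma Sn_succ (N : ℕ) (φ : ℝ → ℝ) (l : ℝ) (n : ℕ) (x : ℝ) :
  Sn N φ l (n+1) x = max (Sn N φ l n x) (afn N φ (n+1) x) := rfl

lemma Sn_ge_l (N : ℕ) (φ : ℝ → ℝ) (l : ℝ) (n : ℕ) (x : ℝ) : l ≤ Sn N φ l n x := by
  induction n with
  | zero => exact le_max_left _ _
  | succ n ih => exact ih.trans (le_max_left _ _)

lemma Sn_ge_a (N : ℕ) (φ : ℝ → ℝ) (l : ℝ) (n : ℕ) (x : ℝ) : afn N φ n x ≤ Sn N φ l n x := by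
  cases n with
  | zero => exact le_max_right _ _
  | succ n => exact (le_max_right _ _)

lemma Sn_mono (N : ℕ) (φ : ℝ → ℝ) (l : ℝ) (x : ℝ) : Monotone (fun n => Sn N φ l n x) :=
  monotone_nat_of_le_succ fun _ => le_max_left _ _

lemma afn_zero {N : ℕ} (hN : 2 ≤ N) (φ : ℝ → ℝ) {x : ℝ} (hx : x ∈ Ico (0:ℝ) 1) :
    afn N φ 0 x = ∫ x, |φ x| ∂U := by
  have : fl N 0 x = 0 := by have := fl_lt hN 0 hx; simpa using this
  unfold afn
  rw [this]
  simp [adicAvg, adicItv, U]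

/-- telescoping -/
lemma telescope {N : ℕ} (hN : 2 ≤ N) {φ : ℝ → ℝ} (hφ : Integrable φ U) {l : ℝ} 
    (hl : ∫ x, |φ x| ∂U ≤ l) (A g : ℝ → ℝ)
    (h : ∀ a b, l ≤ a → a ≤ b → b ≤ N * a → b * (g b - g a) ≤ A b - A a) (n : ℕ) :
    (∫ x, |φ x| * g (Sn N φ l n x) ∂U) - (∫ x, |φ x| ∂U) * g l ≤ (∫ x, A (Sn N φ l n x) ∂U) - A l := by
  induction n with
  | zero =>
    have h0 : ∀ x ∈ Ico (0:ℝ) 1, Sn N φ l 0 x = l := fun x hx => by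
      simp [Sn, afn_zero hN φ hx, hl]
    have e1 : ∫ x, |φ x| * g (Sn N φ l 0 x) ∂U = ∫ x, |φ x| * g l ∂U :=
      integral_congr_ae (ae_U fun x hx => by simp only [h0 x hx])
    have e2 : ∫ x, A (Sn N φ l 0 x) ∂U = ∫ x, A l ∂U :=
      integral_congr_ae (ae_U fun x hx => by simp only [h0 x hx])
    rw [e1, e2, integral_mul_const]
    simp
  | succ n ih =>
    have L0 := Sn_lev hN φ l n
    have L1 := Sn_lev hN φ l (n+1)
    have La := afn_lev N φ (n+1)
    have key : ∫ x, (afn N φ (n+1) x * g (Sn N φ l (n+1) x) - afn N φ (n+1) x * g (Sn N φ l n x)) ∂U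
        ≤ ∫ x, (A (Sn N φ l (n+1) x) - A (Sn N φ l n x)) ∂U := by
      refine integral_mono_ae ?_ ?_ (ae_U fun x hx => ?_)
      · exact ((La.comp2 (L1.comp g) (fun a b => a * b)).int hN).sub
          ((La.comp2 ((L0.comp g).succ hN) (fun a b => a * b)).int hN)
      · exact ((L1.comp A).int hN).sub ((L0.comp A).int hN)
      · simp only
        rw [Sn_succ]
        rcases le_total (afn N φ (n+1) x) (Sn N φ l n x) with hc | hc
        · simp [max_eq_left hc]
        · rw [max_eq_right hc, ← mul_sub]
          refine h _ _ (Sn_ge_l _ _ _ _ _) hc ((afn_succ_le hN hφ n hx).trans ?_)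
          gcongr
          exact Sn_ge_a _ _ _ _ _
    rw [integral_sub ((La.comp2 (L1.comp g) (fun a b => a * b)).int hN)
          ((La.comp2 ((L0.comp g).succ hN) (fun a b => a * b)).int hN),
      integral_sub ((L1.comp A).int hN) ((L0.comp A).int hN),
      int_afn hN (L1.comp g) hφ, int_afn hN ((L0.comp g).succ hN) hφ] at key
    linarith

lemma adicMax_eq {N : ℕ} (hN : 2 ≤ N) (φ : ℝ → ℝ) {x : ℝ} (hx : x ∈ Ico (0:ℝ) 1) :
    adicMax N φ x = ⨆ n, afn N φ n x := by
  unfold adicMax iSup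
  congr 1
  ext r
  simp only [mem_ofPred_eq, mem_range]
  constructor
  · rintro ⟨m, k, hk, hm, rfl⟩
    rw [mem_adic hN _ _ hx.1] at hm
    exact ⟨m, by rw [afn, hm]⟩
  · rintro ⟨n, rfl⟩
    exact ⟨n, fl N n x, fl_lt hN n hx, (mem_adic hN _ _ hx.1).2 rfl, rfl⟩

lemma ae_tendsto_afn {N : ℕ} (hN : 2 ≤ N) {φ : ℝ → ℝ} (hφ : Integrable φ U) :
    ∀ᵐ x ∂U, Tendsto (fun n => afn N φ n x) atTop (nhds |φ x|) := by
  have hψ : Integrable ((Ico (0:ℝ) 1).indicator (fun x => |φ x|)) volume :=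
    (integrable_indicator_iff measurableSet_Ico).2 hφ.abs
  have := IsUnifLocDoublingMeasure.ae_tendsto_average volume hψ.locallyIntegrable 1
  rw [ae_restrict_iff' measurableSet_Ico]
  filter_upwards [this] with x hx hxI
  have hN1 : (1:ℝ) < N := by exact_mod_cast hN
  have hpos : ∀ n : ℕ, (0:ℝ) < (N:ℝ)^n := fun n => by positivity
  have hlim : Tendsto (fun n : ℕ => (1/2:ℝ) / (N:ℝ)^n) atTop (nhdsWithin 0 (Ioi 0)) := by
    refine tendsto_nhdsWithin_iff.2 ⟨?_, Eventually.of_forall fun n => ?_⟩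
    · exact (tendsto_const_nhds (x := (1/2:ℝ))).div_atTop (tendsto_pow_atTop_atTop_of_one_lt hN1)
    · have := hpos n
      simp only [mem_Ioi]; positivity
  have hball : ∀ n : ℕ, Metric.closedBall (((fl N n x : ℝ) + 1/2) / (N:ℝ)^n) ((1/2:ℝ) / (N:ℝ)^n)
      = Icc ((fl N n x : ℝ) / (N:ℝ)^n) (((fl N n x : ℝ) + 1) / (N:ℝ)^n) := by
    intro n
    rw [Real.closedBall_eq_Icc]
    congr 1 <;> ring
  have hmem : ∀ n, x ∈ adicItv N n (fl N n x) := fun n => (mem_adic hN _ _ hxI.1).2 rfl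
  have := hx (fun n : ℕ => ((fl N n x : ℝ) + 1/2) / (N:ℝ)^n) _ hlim
    (Eventually.of_forall fun n => by
      rw [one_mul, hball]
      exact Ico_subset_Icc_self (hmem n))
  simp only [indicator_of_mem hxI] at this
  refine this.congr fun n => ?_
  rw [hball, setAverage_eq, Real.volume_real_Icc_of_le (by gcongr; linarith),
    setIntegral_congr_set Ico_ae_eq_Icc.symm]
  have : ∫ y in Ico ((fl N n x : ℝ) / (N:ℝ)^n) (((fl N n x : ℝ) + 1) / (N:ℝ)^n), (Ico (0:ℝ) 1).indicator (fun x => |φ x|) y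
      = ∫ y in adicItv N n (fl N n x), |φ y| := 
    setIntegral_congr_fun measurableSet_Ico fun y hy => by
      rw [indicator_of_mem (adic_sub hN (fl_lt hN n hxI) hy)]
  rw [this, afn, adicAvg, smul_eq_mul]
  congr 1
  have := hpos n
  field_simp
  ring

lemma scalar1 {n s p : ℝ} (hn : 1 < n) (hp : 1 < p) (h1 : 1 ≤ s) (h2 : s ≤ n) :
    (n ^ p - 1) / (n ^ p - n) * (s ^ p - s) ≤ s ^ p - 1 := by
  have hnp : n < n ^ p := by
    simpa using Real.rpow_lt_rpow_of_exponent_lt hn hp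
  have hcv := (convexOn_rpow hp.le).2 (show (1:ℝ) ∈ Ici 0 by simp)
    (show n ∈ Ici (0:ℝ) by simp; linarith)
    (show 0 ≤ (n - s) / (n - 1) from div_nonneg (by linarith) (by linarith))
    (show 0 ≤ (s - 1) / (n - 1) from div_nonneg (by linarith) (by linarith))
    (by rw [← add_div]; rw [div_eq_one_iff_eq] <;> [ring; linarith])
  have hn1 : n - 1 ≠ 0 := by linarith
  have hs : (n - s) / (n - 1) * 1 + (s - 1) / (n - 1) * n = s := by
    field_simp; ring
  simp only [smul_eq_mul, hs, Real.one_rpow] at hcv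
  have h3 : s ^ p * (n - 1) ≤ (n - s) + (s - 1) * n ^ p := by
    have h := mul_le_mul_of_nonneg_right hcv (by linarith : 0 ≤ n - 1)
    have e : ((n - s) / (n - 1) * 1 + (s - 1) / (n - 1) * n ^ p) * (n - 1)
      = (n - s) + (s - 1) * n ^ p := by field_simp
    linarith
  rw [div_mul_eq_mul_div, div_le_iff₀ (by linarith)]
  nlinarith

lemma scale {a b p : ℝ} (ha : 0 < a) (hab : a ≤ b) :
    b ^ p = (b / a) ^ p * a ^ p ∧ b * b ^ (p - 1) = (b / a) ^ p * a ^ p ∧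
      b * a ^ (p - 1) = (b / a) * a ^ p := by
  have hb : 0 < b := by linarith
  have h1 : b ^ p = (b / a) ^ p * a ^ p := by
    rw [← Real.mul_rpow (by positivity) ha.le, div_mul_cancel₀ _ ha.ne']
  refine ⟨h1, ?_, ?_⟩
  · rw [Real.rpow_sub_one hb.ne', ← h1]; field_simp
  · rw [Real.rpow_sub_one ha.ne']; field_simp

lemma scalar1' {n a b p : ℝ} (hn : 1 < n) (hp : 1 < p) (ha : 0 < a) (h1 : a ≤ b) (h2 : b ≤ n * a) :
    b * ((n ^ p - 1) / (n ^ p - n) * b ^ (p-1) - (n ^ p - 1) / (n ^ p - n) * a ^ (p-1))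
      ≤ b ^ p - a ^ p := by
  obtain ⟨e1, e2, e3⟩ := scale (p := p) ha h1
  have h := scalar1 hn hp ((one_le_div ha).2 h1) ((div_le_iff₀ ha).2 h2)
  have h' := mul_le_mul_of_nonneg_right h (Real.rpow_nonneg ha.le p)
  rw [← mul_sub, mul_left_comm, mul_sub b, e1, e2, e3]
  linarith

lemma scalar2' {a b p : ℝ} (hp : 1 < p) (ha : 0 < a) (h1 : a ≤ b) :
    b * (-(p / (p - 1) * b ^ (p-1)) - -(p / (p - 1) * a ^ (p-1)))
      ≤ -b ^ p - -a ^ p := by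
  obtain ⟨e1, e2, e3⟩ := scale (p := p) ha h1
  have hs := (one_le_div ha).2 h1
  have hb := one_add_mul_self_le_rpow_one_add (s := b / a - 1) (by linarith) hp.le
  rw [add_sub_cancel] at hb
  have h : (b / a) ^ p - 1 ≤ p / (p - 1) * ((b / a) ^ p - b / a) := by
    rw [div_mul_eq_mul_div, le_div_iff₀ (by linarith)]
    linarith
  have h' := mul_le_mul_of_nonneg_right h (Real.rpow_nonneg ha.le p)
  have : b * (-(p / (p - 1) * b ^ (p-1)) - -(p / (p - 1) * a ^ (p-1)))
    = -(p / (p-1) * (b * b ^ (p-1) - b * a ^ (p-1))) := by ring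
  rw [this, e2, e3, e1]
  linarith

lemma young {q a b p : ℝ} (hq : 0 < q) (hp : 1 < p) (ha : 0 ≤ a) (hb : 0 < b) :
    q * (a * b ^ (p-1)) ≤ 1/2 * b ^ p + q * (2 * q) ^ (p-1) * a ^ p := by
  have h0 : 0 ≤ b ^ p := by positivity
  have h1 : 0 ≤ a ^ p := by positivity
  have h2 : 0 ≤ b ^ (p-1) := by positivity
  have h3 : 0 ≤ (2*q) ^ (p-1) := by positivity
  rcases le_total (q * a) (b / 2) with h | h
  · have : b * b ^ (p-1) = b ^ p := by rw [Real.rpow_sub_one hb.ne']; field_simp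
    have := mul_le_mul_of_nonneg_right h h2
    have : 0 ≤ q * (2 * q) ^ (p-1) * a ^ p := by positivity
    nlinarith
  · have hapos : 0 < a := by
      rcases ha.eq_or_lt with h' | h'
      · subst h'; linarith
      · exact h'
    have e : b ^ (p-1) ≤ (2 * q) ^ (p-1) * a ^ (p-1) := by
      rw [← Real.mul_rpow (by positivity) ha]
      exact Real.rpow_le_rpow hb.le (by linarith) (by linarith)
    have e2 : a * a ^ (p-1) = a ^ p := by rw [Real.rpow_sub_one hapos.ne']; field_simp
    calc q * (a * b ^ (p-1)) ≤ q * (a * ((2 * q) ^ (p-1) * a ^ (p-1))) := by gcongr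
      _ = q * (2 * q) ^ (p-1) * (a * a ^ (p-1)) := by ring
      _ ≤ _ := by rw [e2]; linarith

lemma doob {N : ℕ} (hN : 2 ≤ N) {φ : ℝ → ℝ} (hφ : Integrable φ U) {p l : ℝ} (hp : 1 < p)
    (hl0 : 0 < l) (hl : ∫ x, |φ x| ∂U ≤ l) (hφp : Integrable (fun x => |φ x| ^ p) U) :
    ∃ K, ∀ n, ∫ x, Sn N φ l n x ^ p ∂U ≤ K := by
  set q := p / (p - 1) with hq
  have hq0 : 0 < q := div_pos (by linarith) (by linarith)
  refine ⟨2 * (l ^ p + q * (2 * q) ^ (p-1) * ∫ x, |φ x| ^ p ∂U), fun n => ?_⟩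
  have h := telescope hN hφ hl (fun x => - x ^ p) (fun x => -(q * x ^ (p-1)))
    (fun a b h1 h2 _ => scalar2' hp (by linarith) h2) n
  have hL := Sn_lev hN φ l n
  have i1 := (hL.comp (fun y => y ^ p)).int hN
  have hy : ∫ x, q * (|φ x| * Sn N φ l n x ^ (p-1)) ∂U ≤
      ∫ x, (1/2 * Sn N φ l n x ^ p + q * (2 * q) ^ (p-1) * |φ x| ^ p) ∂U := by
    refine integral_mono (((hL.comp (fun y => y ^ (p-1))).mul_int hN hφ.abs).const_mul _)
      ((i1.const_mul _).add (hφp.const_mul _)) fun x => ?_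
    exact young hq0 hp (abs_nonneg _) (lt_of_lt_of_le hl0 (Sn_ge_l _ _ _ _ _))
  rw [integral_add (i1.const_mul _) (hφp.const_mul _), integral_const_mul, integral_const_mul, integral_const_mul] at hy
  simp only [integral_neg, mul_neg] at h
  have e : ∫ x, |φ x| * (q * Sn N φ l n x ^ (p-1)) ∂U = q * ∫ x, |φ x| * Sn N φ l n x ^ (p-1) ∂U := by
    rw [← integral_const_mul]; congr 1; funext x; ring
  rw [e] at h
  have : 0 ≤ (∫ x, |φ x| ∂U) * (q * l ^ (p-1)) := by
    have : 0 ≤ ∫ x, |φ x| ∂U := integral_nonneg fun _ => abs_nonneg _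
    positivity
  linarith

noncomputable def MM (N : ℕ) (φ : ℝ → ℝ) (x : ℝ) : ℝ := ⨆ n, afn N φ n x

lemma MM_meas (N : ℕ) (φ : ℝ → ℝ) : Measurable (MM N φ) :=
  Measurable.iSup fun n => (afn_lev N φ n).meas

lemma MM_nonneg (N : ℕ) (φ : ℝ → ℝ) (x : ℝ) : 0 ≤ MM N φ x :=
  Real.iSup_nonneg fun n => afn_nonneg N φ n x

lemma ae_MM {N : ℕ} (hN : 2 ≤ N) {φ : ℝ → ℝ} (hφ : Integrable φ U) (l : ℝ) :
    ∀ᵐ x ∂U, |φ x| ≤ MM N φ x ∧ (∫ x, |φ x| ∂U ≤ MM N φ x) ∧ (∀ n, Sn N φ l n x ≤ max l (MM N φ x)) ∧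
      Tendsto (fun n => Sn N φ l n x) atTop (nhds (max l (MM N φ x))) := by
  filter_upwards [ae_tendsto_afn hN hφ, ae_U (fun x hx => afn_zero hN φ hx)] with x hx h0
  have hb := hx.bddAbove_range
  have hle : ∀ n, afn N φ n x ≤ MM N φ x := fun n => le_ciSup hb n
  have hS : ∀ n, Sn N φ l n x ≤ max l (MM N φ x) := by
    intro n
    induction n with
    | zero => exact max_le_max le_rfl (hle 0)
    | succ n ih => exact max_le ih ((hle _).trans (le_max_right _ _))
  refine ⟨le_of_tendsto' hx hle, h0 ▸ hle 0, hS, ?_⟩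
  refine tendsto_atTop_isLUB (Sn_mono N φ l x) ⟨?_, ?_⟩
  · rintro _ ⟨n, rfl⟩; exact hS n
  · intro b hb
    have hb' : ∀ n, Sn N φ l n x ≤ b := fun n => hb ⟨n, rfl⟩
    exact max_le ((Sn_ge_l _ _ _ 0 _).trans (hb' 0))
      (ciSup_le fun n => (Sn_ge_a _ _ l _ _).trans (hb' n))

lemma int_S {N : ℕ} (hN : 2 ≤ N) {φ : ℝ → ℝ} (hφ : Integrable φ U) {p l : ℝ} (hp : 1 < p)
    (hl0 : 0 < l) (hl : ∫ x, |φ x| ∂U ≤ l) (hφp : Integrable (fun x => |φ x| ^ p) U) :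
    Integrable (fun x => (max l (MM N φ x)) ^ p) U := by
  obtain ⟨K, hK⟩ := doob hN hφ hp hl0 hl hφp
  have hm : Measurable (fun x => (max l (MM N φ x)) ^ p) :=
    (measurable_const.max (MM_meas N φ)).pow_const p
  have hpos : ∀ n x, 0 < Sn N φ l n x := fun n x => lt_of_lt_of_le hl0 (Sn_ge_l _ _ _ _ _)
  have hL := fun n => Sn_lev hN φ l n
  refine ⟨hm.aestronglyMeasurable, ?_⟩
  rw [hasFiniteIntegral_iff_ofReal (Eventually.of_forall fun x => 
    Real.rpow_nonneg (le_max_of_le_left hl0.le) _)]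
  have ht := lintegral_tendsto_of_tendsto_of_monotone (μ := U)
    (f := fun n x => ENNReal.ofReal (Sn N φ l n x ^ p))
    (F := fun x => ENNReal.ofReal ((max l (MM N φ x)) ^ p))
    (fun n => ((hL n).meas.pow_const p).ennreal_ofReal.aemeasurable)
    (Eventually.of_forall fun x m n hmn => ENNReal.ofReal_le_ofReal
      (Real.rpow_le_rpow (hpos _ _).le (Sn_mono N φ l x hmn) (by linarith)))
    (by
      filter_upwards [ae_MM hN hφ l] with x hx
      refine (ENNReal.continuous_ofReal.tendsto _).comp ?_
      exact hx.2.2.2.rpow_const (Or.inr (by linarith)))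
  refine lt_of_le_of_lt (le_of_tendsto' ht (b := ENNReal.ofReal K) fun n => ?_) ENNReal.ofReal_lt_top
  rw [← ofReal_integral_eq_lintegral_ofReal (((hL n).comp (fun y => y ^ p)).int hN)
    (Eventually.of_forall fun x => Real.rpow_nonneg (hpos _ _).le _)]
  exact ENNReal.ofReal_le_ofReal (hK n)

lemma main_ineq {N : ℕ} (hN : 2 ≤ N) {φ : ℝ → ℝ} (hφ : Integrable φ U) {p l : ℝ} (hp : 1 < p)
    (hl0 : 0 < l) (hl : ∫ x, |φ x| ∂U ≤ l) (hφp : Integrable (fun x => |φ x| ^ p) U) :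
    ((N:ℝ) ^ p - 1) / ((N:ℝ) ^ p - N) * ((∫ x, |φ x| ^ p ∂U) - l ^ (p-1) * ∫ x, |φ x| ∂U)
      ≤ (∫ x, (max l (MM N φ x)) ^ p ∂U) - l ^ p := by
  have hN1 : (1:ℝ) < N := by exact_mod_cast hN
  have hnp : (N:ℝ) < (N:ℝ) ^ p := by
    simpa using Real.rpow_lt_rpow_of_exponent_lt hN1 hp
  set C := ((N:ℝ) ^ p - 1) / ((N:ℝ) ^ p - N) with hC
  have hC0 : 0 ≤ C := div_nonneg (by linarith) (by linarith)
  have hI := int_S hN hφ hp hl0 hl hφp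
  have hpos : ∀ n x, 0 < Sn N φ l n x := fun n x => lt_of_lt_of_le hl0 (Sn_ge_l _ _ _ _ _)
  have hL := fun n => Sn_lev hN φ l n
  have hmul : ∀ y : ℝ, 0 ≤ y → y * y ^ (p-1) = y ^ p := by
    intro y hy
    rcases hy.eq_or_lt with h | h
    · subst h; rw [Real.zero_rpow (x := p) (by linarith)]; simp
    · rw [Real.rpow_sub_one h.ne']; field_simp
  have hmpos : ∀ x, 0 < max l (MM N φ x) := fun x => lt_max_of_lt_left hl0
  have hstep : ∀ n, C * ((∫ x, |φ x| * Sn N φ l n x ^ (p-1) ∂U) - l ^ (p-1) * ∫ x, |φ x| ∂U)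
      ≤ (∫ x, (max l (MM N φ x)) ^ p ∂U) - l ^ p := by
    intro n
    have h := telescope hN hφ hl (fun x => x ^ p) (fun x => C * x ^ (p-1))
      (fun a b h1 h2 h3 => scalar1' hN1 hp (by linarith) h2 h3) n
    have e : ∫ x, |φ x| * (C * Sn N φ l n x ^ (p-1)) ∂U = C * ∫ x, |φ x| * Sn N φ l n x ^ (p-1) ∂U := by
      rw [← integral_const_mul]; congr 1; funext x; ring
    rw [e] at h
    have h2 : ∫ x, Sn N φ l n x ^ p ∂U ≤ ∫ x, (max l (MM N φ x)) ^ p ∂U := by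
      refine integral_mono_ae (((hL n).comp (fun y => y ^ p)).int hN) hI ?_
      filter_upwards [ae_MM hN hφ l] with x hx
      exact Real.rpow_le_rpow (hpos _ _).le (hx.2.2.1 n) (by linarith)
    linarith
  have hlim : Tendsto (fun n => ∫ x, |φ x| * Sn N φ l n x ^ (p-1) ∂U) atTop
      (nhds (∫ x, |φ x| * (max l (MM N φ x)) ^ (p-1) ∂U)) := by
    refine tendsto_integral_of_dominated_convergence (fun x => (max l (MM N φ x)) ^ p)
      (fun n => ((((hL n).comp (fun y => y ^ (p-1))).mul_int hN hφ.abs)).aestronglyMeasurable) hI ?_ ?_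
    · intro n
      filter_upwards [ae_MM hN hφ l] with x hx
      rw [Real.norm_of_nonneg (mul_nonneg (abs_nonneg _) (Real.rpow_nonneg (hpos _ _).le _)),
        ← hmul _ (hmpos x).le]
      exact mul_le_mul (hx.1.trans (le_max_right _ _))
        (Real.rpow_le_rpow (hpos _ _).le (hx.2.2.1 n) (by linarith))
        (Real.rpow_nonneg (hpos _ _).le _) (hmpos x).le
    · filter_upwards [ae_MM hN hφ l] with x hx
      exact (hx.2.2.2.rpow_const (Or.inr (by linarith))).const_mul _
  have hfin := le_of_tendsto' ((hlim.sub_const (l ^ (p-1) * ∫ x, |φ x| ∂U)).const_mul C) hstep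
  refine le_trans ?_ hfin
  refine mul_le_mul_of_nonneg_left (sub_le_sub_right ?_ _) hC0
  refine integral_mono_ae hφp ?_ ?_
  · refine hI.mono' (hφ.abs.aestronglyMeasurable.mul
      ((measurable_const.max (MM_meas N φ)).pow_const _).aestronglyMeasurable) ?_
    filter_upwards [ae_MM hN hφ l] with x hx
    rw [Real.norm_of_nonneg (mul_nonneg (abs_nonneg _) (Real.rpow_nonneg (hmpos _).le _)),
        ← hmul _ (hmpos x).le]
    gcongr
    exact hx.1.trans (le_max_right _ _)
  · filter_upwards [ae_MM hN hφ l] with x hx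
    rw [← hmul _ (abs_nonneg _)]
    gcongr
    exact hx.1.trans (le_max_right _ _)

lemma weak {N : ℕ} (hN : 2 ≤ N) {φ : ℝ → ℝ} (hφ : Integrable φ U) {t : ℝ}
    (ht0 : 0 < t) (ht : ∫ x, |φ x| ∂U ≤ t) :
    t * U.real {x | t < MM N φ x} ≤ ∫ x, |φ x| ∂U := by
  have hL := fun n => Sn_lev hN φ t n
  have hf0 : 0 ≤ ∫ x, |φ x| ∂U := integral_nonneg fun _ => abs_nonneg _
  have hn : ∀ n, U.real {x | t < Sn N φ t n x} ≤ (∫ x, |φ x| ∂U) / t := by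
    intro n
    have h := telescope hN hφ ht (fun x => - (t * if t < x then 1 else 0))
      (fun x => - (if t < x then 1 else 0)) (fun a b h1 h2 h3 => by
        split_ifs with c1 c2 c2 <;> simp <;> linarith) n
    simp only [lt_irrefl, if_false, mul_neg, integral_neg, integral_const_mul] at h
    have e : ∫ x, (if t < Sn N φ t n x then (1:ℝ) else 0) ∂U = U.real {x | t < Sn N φ t n x} := by
      rw [← integral_indicator_one (measurableSet_lt measurable_const (hL n).meas)]
      congr 1
    have e2 : ∫ x, |φ x| * (if t < Sn N φ t n x then (1:ℝ) else 0) ∂U ≤ ∫ x, |φ x| ∂U := by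
      refine integral_mono (((hL n).comp (fun y => if t < y then (1:ℝ) else 0)).mul_int hN hφ.abs) hφ.abs
        fun x => ?_
      have := abs_nonneg (φ x)
      dsimp only
      split_ifs <;> linarith
    rw [e] at h
    rw [le_div_iff₀ ht0]
    linarith
  have hsub : {x | t < MM N φ x} ⊆ ⋃ n, {x | t < Sn N φ t n x} := by
    intro x hx
    obtain ⟨n, hn⟩ := exists_lt_of_lt_ciSup (show t < ⨆ n, afn N φ n x from hx)
    exact mem_iUnion.2 ⟨n, lt_of_lt_of_le hn (Sn_ge_a _ _ _ _ _)⟩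
  have hmono : Monotone (fun n => {x | t < Sn N φ t n x}) := fun m n hmn x hx =>
    lt_of_lt_of_le hx (Sn_mono N φ t x hmn)
  have : U (⋃ n, {x | t < Sn N φ t n x}) ≤ ENNReal.ofReal ((∫ x, |φ x| ∂U) / t) := by
    rw [hmono.measure_iUnion]
    refine iSup_le fun n => ?_
    rw [← ofReal_measureReal]
    exact ENNReal.ofReal_le_ofReal (hn n)
  have h2 : U.real {x | t < MM N φ x} ≤ (∫ x, |φ x| ∂U) / t :=
    ENNReal.toReal_le_of_le_ofReal (by positivity) ((measure_mono hsub).trans this)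
  rw [le_div_iff₀ ht0] at h2
  linarith

lemma between {A B : Set ℝ} (hA : MeasurableSet A) (hB : MeasurableSet B) (hAB : A ⊆ B)
    {κ : ℝ} (h1 : U.real A ≤ κ) (h2 : κ ≤ U.real B) :
    ∃ E, MeasurableSet E ∧ A ⊆ E ∧ E ⊆ B ∧ U.real E = κ := by
  set h : ℝ → ℝ := fun s => U.real (A ∪ (B ∩ Iio s)) with hh
  have hmono : Monotone h := fun s t hst => measureReal_mono (by
    gcongr)
  have hlip : ∀ s t, s ≤ t → h t - h s ≤ t - s := by
    intro s t hst
    have : h t ≤ h s + U.real (Ico s t) := by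
      refine (measureReal_mono ?_).trans (measureReal_union_le _ _)
      rintro x (hx | ⟨hx, hx'⟩)
      · exact Or.inl (Or.inl hx)
      · rcases lt_or_ge x s with hs | hs
        · exact Or.inl (Or.inr ⟨hx, hs⟩)
        · exact Or.inr ⟨hs, hx'⟩
    have h3 : U.real (Ico s t) ≤ t - s := by
      rw [← Real.volume_real_Ico_of_le hst]
      exact ENNReal.toReal_mono (by simp) (Measure.restrict_apply_le _ _)
    linarith
  have hcont : Continuous h := by
    refine (LipschitzWith.of_dist_le_mul (K := 1) fun s t => ?_).continuous
    rw [Real.dist_eq, Real.dist_eq, NNReal.coe_one, one_mul]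
    rcases le_total s t with hst | hst
    · rw [abs_sub_comm, abs_of_nonneg (by linarith [hmono hst]), abs_sub_comm, abs_of_nonneg (by linarith)]
      exact hlip _ _ hst
    · rw [abs_of_nonneg (by linarith [hmono hst]), abs_of_nonneg (by linarith)]
      exact hlip _ _ hst
  have e0 : h 0 ≤ κ := by
    refine le_trans (le_of_eq ?_) h1
    refine measureReal_congr ?_
    filter_upwards [ae_U (fun x hx => hx)] with x hx
    apply propext
    show x ∈ A ∪ (B ∩ Iio 0) ↔ x ∈ A
    constructor
    · rintro (h | h)
      · exact h
      · exact absurd h.2 (not_lt.2 hx.1)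
    · exact Or.inl
  have e1 : κ ≤ h 1 := by
    refine le_trans h2 (le_of_eq ?_)
    refine measureReal_congr ?_
    filter_upwards [ae_U (fun x hx => hx)] with x hx
    apply propext
    show x ∈ B ↔ x ∈ A ∪ (B ∩ Iio 1)
    constructor
    · exact fun h => Or.inr ⟨h, hx.2⟩
    · rintro (h | h)
      · exact hAB h
      · exact h.1
  obtain ⟨s, _, hs⟩ := intermediate_value_Icc zero_le_one hcont.continuousOn (show κ ∈ Icc (h 0) (h 1) from ⟨e0, e1⟩)
  exact ⟨A ∪ (B ∩ Iio s), hA.union (hB.inter measurableSet_Iio), subset_union_left,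
    union_subset hAB inter_subset_left, hs⟩

lemma iUnion_bound {s : ℕ → Set ℝ} (hs : Monotone s) {c : ℝ} (hc : 0 ≤ c)
    (h : ∀ n, U.real (s n) ≤ c) : U.real (⋃ n, s n) ≤ c := by
  refine ENNReal.toReal_le_of_le_ofReal hc ?_
  rw [hs.measure_iUnion]
  refine iSup_le fun n => ?_
  rw [← ofReal_measureReal]
  exact ENNReal.ofReal_le_ofReal (h n)

lemma select {N : ℕ} (hN : 2 ≤ N) {φ : ℝ → ℝ} (hφ : Integrable φ U) {κ : ℝ} (hκ : κ ∈ Ioc (0:ℝ) 1)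
    (hf : 0 < ∫ x, |φ x| ∂U) :
    ∃ l, ∫ x, |φ x| ∂U ≤ l ∧ l ≤ (∫ x, |φ x| ∂U) / κ ∧ ∃ E, MeasurableSet E ∧ U.real E = κ ∧
      (∀ x, l < MM N φ x → x ∈ E) ∧ ∀ x ∈ E, l ≤ MM N φ x := by
  set f := ∫ x, |φ x| ∂U with hfdef
  set M := MM N φ with hM
  have hMm : Measurable M := MM_meas N φ
  set T : Set ℝ := {t | f ≤ t ∧ U.real {x | t < M x} ≤ κ} with hT
  have hκ0 := hκ.1
  have hfk : f ≤ f / κ := by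
    rw [le_div_iff₀ hκ0]; nlinarith [hκ.2]
  have hmem : f / κ ∈ T := by
    refine ⟨hfk, ?_⟩
    have := weak hN hφ (t := f / κ) (by positivity) hfk
    rw [← hfdef, div_mul_eq_mul_div, div_le_iff₀ hκ0] at this
    exact le_of_mul_le_mul_left this hf
  have hbdd : BddBelow T := ⟨f, fun t ht => ht.1⟩
  set l := sInf T with hl
  have hfl : f ≤ l := le_csInf ⟨_, hmem⟩ fun t ht => ht.1
  refine ⟨l, hfl, csInf_le hbdd hmem, ?_⟩
  have hinv : ∀ m n : ℕ, m ≤ n → (1:ℝ) / (n + 1) ≤ 1 / (m + 1) := fun m n h =>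
    Nat.one_div_le_one_div h
  have hup : U.real {x | l < M x} ≤ κ := by
    have e : {x | l < M x} = ⋃ n : ℕ, {x | l + 1 / ((n:ℝ) + 1) < M x} := by
      ext x
      simp only [mem_iUnion, mem_ofPred_eq]
      constructor
      · intro h
        obtain ⟨n, hn⟩ := exists_nat_one_div_lt (sub_pos.2 h)
        exact ⟨n, by linarith⟩
      · rintro ⟨n, hn⟩
        have : (0:ℝ) < 1 / ((n:ℝ)+1) := by positivity
        linarith
    rw [e]
    refine iUnion_bound (fun m n hmn x hx => ?_) hκ0.le fun n => ?_
    · have := hinv m n hmn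
      have hx' : l + 1 / ((m:ℝ) + 1) < M x := hx
      show l + 1 / ((n:ℝ) + 1) < M x
      linarith
    · have : l < l + 1 / ((n:ℝ) + 1) := by
        have : (0:ℝ) < 1 / ((n:ℝ)+1) := by positivity
        linarith
      obtain ⟨t, ht, htl⟩ := exists_lt_of_csInf_lt ⟨_, hmem⟩ this
      exact (measureReal_mono (fun x hx => lt_trans htl hx)).trans ht.2
  have hlt : ∀ t < l, U.real {x | M x ≤ t} ≤ 1 - κ := by
    intro t ht
    rcases lt_or_ge t f with h | h
    · have : U.real {x | M x ≤ t} = 0 := by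
        rw [measureReal_eq_zero_iff]
        have : ∀ᵐ x ∂U, ¬ (M x ≤ t) := by
          filter_upwards [ae_MM hN hφ l] with x hx
          have := hx.2.1
          exact not_le.2 (lt_of_lt_of_le h this)
        rw [ae_iff] at this
        simpa only [not_not] using this
      rw [this]; linarith [hκ.2]
    · have hnot : ¬ U.real {x | t < M x} ≤ κ := fun hh => (not_le.2 ht) (csInf_le hbdd ⟨h, hh⟩)
      have e : {x | M x ≤ t} = {x | t < M x}ᶜ := by ext x; simp
      rw [e, probReal_compl_eq_one_sub (measurableSet_lt measurable_const hMm)]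
      linarith
  have hlow : κ ≤ U.real {x | l ≤ M x} := by
    have e : {x | l ≤ M x}ᶜ = ⋃ n : ℕ, {x | M x ≤ l - 1 / ((n:ℝ) + 1)} := by
      ext x
      simp only [mem_iUnion, mem_ofPred_eq, mem_compl_iff, not_le]
      constructor
      · intro h
        obtain ⟨n, hn⟩ := exists_nat_one_div_lt (sub_pos.2 h)
        exact ⟨n, by linarith⟩
      · rintro ⟨n, hn⟩
        have : (0:ℝ) < 1 / ((n:ℝ)+1) := by positivity
        linarith
    have h1 : U.real {x | l ≤ M x}ᶜ ≤ 1 - κ := by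
      rw [e]
      refine iUnion_bound (fun m n hmn x hx => ?_) (by linarith [hκ.2]) fun n => hlt _ ?_
      · have := hinv m n hmn
        have hx' : M x ≤ l - 1 / ((m:ℝ) + 1) := hx
        show M x ≤ l - 1 / ((n:ℝ) + 1)
        linarith
      · have : (0:ℝ) < 1 / ((n:ℝ)+1) := by positivity
        linarith
    rw [probReal_compl_eq_one_sub (measurableSet_le measurable_const hMm)] at h1
    linarith
  obtain ⟨E, hE, h1, h2, h3⟩ := between (measurableSet_lt measurable_const hMm)
    (measurableSet_le measurable_const hMm) (fun x (hx : l < M x) => (le_of_lt hx : l ≤ M x)) hup hlow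
  exact ⟨E, hE, h3, fun x hx => h1 hx, fun x hx => h2 hx⟩

theorem stmt5 (N : ℕ) (hN : 2 ≤ N) (p f F κ : ℝ) (hp : 1 < p)
    (hf : 0 < f) (hF : 0 < F) (hfF : f ^ p ≤ F) (hκ : κ ∈ Set.Ioc (0:ℝ) 1)
    (φ : ℝ → ℝ) (hφm : Measurable φ) (hφ0 : ∀ x ∈ Set.Ico (0:ℝ) 1, 0 ≤ φ x)
    (hφ1 : (∫ x in Set.Ico (0:ℝ) 1, φ x) = f)
    (hφp : (∫ x in Set.Ico (0:ℝ) 1, φ x ^ p) = F) :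
    supMeas N p κ φ ≥
      sInf ((fun u : ℝ => κ * u ^ p +
          (((N : ℝ) ^ p - 1) / ((N : ℝ) ^ p - N)) * (F - u ^ (p - 1) * f)) ''
        Set.Icc f (min ((F / f) ^ (1 / (p - 1))) (f / κ))) := by
  have hφi : Integrable φ U := by
    by_contra h
    rw [integral_undef h] at hφ1; linarith
  have hφpi : Integrable (fun x => φ x ^ p) U := by
    by_contra h
    rw [integral_undef h] at hφp; linarith
  have habs : ∀ x ∈ Ico (0:ℝ) 1, |φ x| = φ x := fun x hx => abs_of_nonneg (hφ0 x hx)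
  have hf1 : ∫ x, |φ x| ∂U = f := by
    rw [← hφ1]; exact setIntegral_congr_fun measurableSet_Ico habs
  have hF1 : ∫ x, |φ x| ^ p ∂U = F := by
    rw [← hφp]
    exact setIntegral_congr_fun measurableSet_Ico fun x hx => by simp only [habs x hx]
  have hpi : Integrable (fun x => |φ x| ^ p) U :=
    hφpi.congr (ae_U fun x hx => by simp only [habs x hx])
  have hκ0 := hκ.1
  have hN1 : (1:ℝ) < N := by exact_mod_cast hN
  have hnp : (N:ℝ) < (N:ℝ) ^ p := by
    simpa using Real.rpow_lt_rpow_of_exponent_lt hN1 hp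
  obtain ⟨l, hfl, hlk, E, hE, hEκ, hE1, hE2⟩ := select hN hφi hκ (hf1 ▸ hf)
  have hl0 : 0 < l := lt_of_lt_of_le hf (hf1 ▸ hfl)
  have hmain := main_ineq hN hφi hp hl0 hfl hpi
  have hS := int_S hN hφi hp hl0 hfl hpi
  have hMi : Integrable (fun x => MM N φ x ^ p) U := by
    refine hS.mono' ((MM_meas N φ).pow_const p).aestronglyMeasurable (Eventually.of_forall fun x => ?_)
    rw [Real.norm_of_nonneg (Real.rpow_nonneg (MM_nonneg _ _ _) _)]
    exact Real.rpow_le_rpow (MM_nonneg _ _ _) (le_max_right _ _) (by linarith)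
  rw [hf1] at hfl hlk hmain
  rw [hF1] at hmain
  set C := ((N:ℝ) ^ p - 1) / ((N:ℝ) ^ p - N) with hC
  have hC0 : 0 ≤ C := div_nonneg (by linarith) (by linarith)
  have hEc : U.real Eᶜ = 1 - κ := by rw [probReal_compl_eq_one_sub hE, hEκ]
  have hsplit := integral_add_compl hE hS
  have e1 : ∫ x in E, max l (MM N φ x) ^ p ∂U = ∫ x in E, MM N φ x ^ p ∂U :=
    setIntegral_congr_fun hE fun x hx => by simp only [max_eq_right (hE2 x hx)]
  have e2 : ∫ x in Eᶜ, max l (MM N φ x) ^ p ∂U = (1 - κ) * l ^ p := by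
    have : ∫ x in Eᶜ, max l (MM N φ x) ^ p ∂U = ∫ x in Eᶜ, l ^ p ∂U :=
      setIntegral_congr_fun hE.compl fun x hx => by
        simp only [max_eq_left (not_lt.1 fun h => hx (hE1 x h))]
    rw [this, setIntegral_const, hEc, smul_eq_mul]
  have hlow : κ * l ^ p + C * (F - l ^ (p-1) * f) ≤ ∫ x in E, MM N φ x ^ p ∂U := by
    linarith
  have hlow2 : κ * l ^ p ≤ ∫ x in E, MM N φ x ^ p ∂U := by
    have : ∫ x in E, l ^ p ∂U = κ * l ^ p := by rw [setIntegral_const, hEκ, smul_eq_mul]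
    rw [← this]
    exact setIntegral_mono_on (integrable_const _) hMi.integrableOn hE
      fun x hx => Real.rpow_le_rpow hl0.le (hE2 x hx) (by linarith)
  have hsup : ∫ x in E, MM N φ x ^ p ∂U ≤ supMeas N p κ φ := by
    unfold supMeas
    refine le_csSup ⟨∫ x, MM N φ x ^ p ∂U, ?_⟩ ⟨E ∩ Ico 0 1, hE.inter measurableSet_Ico, inter_subset_right, ?_, ?_⟩
    · rintro z ⟨E', hm', hs', -, rfl⟩
      have : ∫ x in E', adicMax N φ x ^ p = ∫ x in E', MM N φ x ^ p :=
        setIntegral_congr_fun hm' fun x hx => by simp only [adicMax_eq hN φ (hs' hx), MM]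
      rw [this]
      exact setIntegral_mono_set hMi (Eventually.of_forall fun x => Real.rpow_nonneg (MM_nonneg N φ x) p)
        (LE.le.eventuallyLE hs')
    · rw [← Measure.restrict_apply hE, ← hEκ, ofReal_measureReal]
    · rw [Measure.restrict_restrict hE]
      exact setIntegral_congr_fun (hE.inter measurableSet_Ico) fun x hx => by
        simp only [adicMax_eq hN φ hx.2, MM]
  have hFf : 0 < F / f := by positivity
  have hp1 : 0 < p - 1 := by linarith
  set u0 := (F / f) ^ (1 / (p - 1)) with hu0
  have hu0p : u0 ^ (p - 1) = F / f := by
    rw [hu0, ← Real.rpow_mul hFf.le, one_div_mul_cancel hp1.ne', Real.rpow_one]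
  have hu0pos : 0 < u0 := by positivity
  have hfu0 : f ≤ u0 := by
    rw [← Real.rpow_le_rpow_iff hf.le hu0pos.le hp1, hu0p, Real.rpow_sub_one hf.ne']
    gcongr
  have hbdd : BddBelow ((fun u : ℝ => κ * u ^ p + C * (F - u ^ (p - 1) * f)) '' Set.Icc f (min u0 (f / κ))) := by
    refine ⟨0, ?_⟩
    rintro _ ⟨u, ⟨hu1, hu2⟩, rfl⟩
    have hu : 0 < u := by linarith
    have h1 : u ^ (p-1) ≤ F / f := by
      rw [← hu0p]
      exact Real.rpow_le_rpow hu.le (hu2.trans (min_le_left _ _)) hp1.le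
    rw [le_div_iff₀ hf] at h1
    have h2 : 0 ≤ C * (F - u ^ (p - 1) * f) := mul_nonneg hC0 (by linarith)
    have h3 : 0 ≤ κ * u ^ p := by positivity
    simp only
    linarith
  rcases le_total l u0 with h | h
  · exact (csInf_le hbdd ⟨l, ⟨hfl, le_min h hlk⟩, rfl⟩).trans (hlow.trans hsup)
  · refine (csInf_le hbdd ⟨u0, ⟨hfu0, le_min le_rfl (h.trans hlk)⟩, rfl⟩).trans (le_trans ?_ (hlow2.trans hsup))
    simp only [hu0p]
    rw [div_mul_cancel₀ _ hf.ne', sub_self, mul_zero, add_zero]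
    gcongr
end

section
/- Let N ≥ 2 be an integer, p > 1, let f, F > 0 satisfy f^p ≤ F, and let κ ∈ (0,1]. Then for every u₀ with f ≤ u₀ ≤ min((F/f)^{1/(p−1)}, f/κ), there exists a nonnegative measurable function φ on [0,1) with ∫ φ dμ = f, ∫ φ^p dμ = F, and sup { ∫_E (M_N φ)^p dμ : E ⊆ [0,1) measurable, μ(E) = κ } = κ·u₀^p + ((N^p − 1)/(N^p − N))·(F − u₀^{p−1} f). -/
open MeasureTheory Set Filter

lemma mem_itv {N : ℕ} (hN : 2 ≤ N) {m k : ℕ} {x : ℝ} :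
    x ∈ adicItv N m k ↔ (k : ℝ) ≤ x * (N : ℝ) ^ m ∧ x * (N : ℝ) ^ m < k + 1 := by
  have hpos : (0 : ℝ) < (N : ℝ) ^ m := by positivity
  simp only [adicItv, Set.mem_Ico, div_le_iff₀ hpos, lt_div_iff₀ hpos]

lemma meas_itv (N m k : ℕ) : MeasurableSet (adicItv N m k) := measurableSet_Ico

lemma vol_itv {N : ℕ} (m k : ℕ) :
    volume (adicItv N m k) = ENNReal.ofReal (((N : ℝ) ^ m)⁻¹) := by
  rw [adicItv, Real.volume_Ico]
  congr 1
  ring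

lemma volr_itv {N : ℕ} (m k : ℕ) :
    volume.real (adicItv N m k) = ((N : ℝ) ^ m)⁻¹ := by
  rw [measureReal_def, vol_itv, ENNReal.toReal_ofReal (by positivity)]

lemma itv_nest {N : ℕ} (hN : 2 ≤ N) {m m' k k' : ℕ} {x : ℝ} (hm : m ≤ m')
    (h : x ∈ adicItv N m k) (h' : x ∈ adicItv N m' k') : adicItv N m' k' ⊆ adicItv N m k := by
  obtain ⟨d, rfl⟩ := Nat.exists_eq_add_of_le hm
  rw [mem_itv hN] at h h'
  have hd : (0 : ℝ) < (N : ℝ) ^ d := by positivity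
  rw [pow_add, ← mul_assoc] at h'
  have h1 : k * N ^ d < k' + 1 := by
    have : (k : ℝ) * (N : ℝ) ^ d < k' + 1 :=
      lt_of_le_of_lt (mul_le_mul_of_nonneg_right h.1 hd.le) h'.2
    exact_mod_cast this
  have h2 : k' < (k + 1) * N ^ d := by
    have : (k' : ℝ) < ((k : ℝ) + 1) * (N : ℝ) ^ d :=
      lt_of_le_of_lt h'.1 (mul_lt_mul_of_pos_right h.2 hd)
    exact_mod_cast this
  have h1' : (k : ℝ) * (N : ℝ) ^ d ≤ k' := by exact_mod_cast Nat.lt_succ_iff.mp h1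
  have h2' : (k' : ℝ) + 1 ≤ ((k : ℝ) + 1) * (N : ℝ) ^ d := by exact_mod_cast h2
  intro y hy
  rw [mem_itv hN] at hy ⊢
  rw [pow_add, ← mul_assoc] at hy
  exact ⟨le_of_mul_le_mul_right (h1'.trans hy.1) hd,
    lt_of_mul_lt_mul_right (hy.2.trans_le h2') hd.le⟩

lemma exists_itv {N : ℕ} (hN : 2 ≤ N) {x b : ℝ} (hx : x ∈ Set.Ico 0 b) :
    ∃ m k : ℕ, x ∈ adicItv N m k ∧ adicItv N m k ⊆ Set.Ico 0 b := by
  have hN1 : (1 : ℝ) < N := by exact_mod_cast hN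
  obtain ⟨m, hm⟩ := pow_unbounded_of_one_lt (1 / (b - x)) hN1
  have hbx : 0 < b - x := sub_pos.mpr hx.2
  rw [div_lt_iff₀ hbx] at hm
  have hpos : (0 : ℝ) < (N : ℝ) ^ m := by positivity
  have h0 : 0 ≤ x * (N : ℝ) ^ m := mul_nonneg hx.1 hpos.le
  refine ⟨m, ⌊x * (N : ℝ) ^ m⌋₊, (mem_itv hN).2 ⟨Nat.floor_le h0, Nat.lt_floor_add_one _⟩, ?_⟩
  intro y hy
  have h1 := Nat.floor_le h0
  rw [mem_itv hN] at hy
  constructor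
  · exact nonneg_of_mul_nonneg_left ((Nat.cast_nonneg _).trans hy.1) hpos
  · refine lt_of_mul_lt_mul_right (a := (N : ℝ) ^ m) ?_ hpos.le
    nlinarith [hy.2]

lemma itv_index {N : ℕ} (hN : 2 ≤ N) {m k : ℕ} {x : ℝ} (hx : x < 1) (h : x ∈ adicItv N m k) :
    k < N ^ m := by
  rw [mem_itv hN] at h
  have hpos : (0 : ℝ) < (N : ℝ) ^ m := by positivity
  have : (k : ℝ) < (N : ℝ) ^ m := by nlinarith [h.1]
  exact_mod_cast this

def pc (N : ℕ) (s : ℕ × ℕ) : Set ℝ := adicItv N s.1 s.2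

def hd (N j : ℕ) (s : ℕ × ℕ) : Set ℝ := adicItv N (s.1 + j) (s.2 * N ^ j)

def AA (N : ℕ) (S : Set (ℕ × ℕ)) (j : ℕ) : Set ℝ := ⋃ s ∈ S, hd N j s

lemma exists_S {N : ℕ} (hN : 2 ≤ N) (θ : ℝ) : ∃ S : Set (ℕ × ℕ),
    S.PairwiseDisjoint (pc N) ∧ (⋃ s ∈ S, pc N s) = Set.Ico 0 θ := by
  classical
  refine ⟨{s | pc N s ⊆ Set.Ico 0 θ ∧ ∀ i < s.1, ∀ k, pc N s ⊆ adicItv N i k →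
    ¬ adicItv N i k ⊆ Set.Ico 0 θ}, ?_, ?_⟩
  · rintro ⟨m, k⟩ hs ⟨m', k'⟩ hs' hne
    rw [Function.onFun, Set.disjoint_left]
    intro x hx hx'
    rcases lt_trichotomy m m' with h | h | h
    · exact hs'.2 m h k (itv_nest hN h.le hx hx') hs.1
    · subst h
      apply hne
      simp only [pc, mem_itv hN] at hx hx'
      have h1 : k < k' + 1 := by exact_mod_cast hx.1.trans_lt hx'.2
      have h2 : k' < k + 1 := by exact_mod_cast hx'.1.trans_lt hx.2
      have : k = k' := by omega
      rw [this]
    · exact hs.2 m' h k' (itv_nest hN h.le hx' hx) hs'.1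
  · ext x
    simp only [Set.mem_iUnion, exists_prop]
    constructor
    · rintro ⟨s, hs, hx⟩
      exact hs.1 hx
    · intro hx
      have hex := exists_itv hN hx
      obtain ⟨k, hk, hk'⟩ := Nat.find_spec hex
      refine ⟨(Nat.find hex, k), ⟨hk', ?_⟩, hk⟩
      intro i hi k' hsub hcon
      exact Nat.find_min hex hi ⟨k', hsub hk, hcon⟩

lemma hd_zero (N : ℕ) (s : ℕ × ℕ) : hd N 0 s = pc N s := by simp [hd, pc]

lemma left_mem_itv {N : ℕ} (hN : 2 ≤ N) (m k : ℕ) : (k : ℝ) / (N : ℝ) ^ m ∈ adicItv N m k := by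
  have hpos : (0 : ℝ) < (N : ℝ) ^ m := by positivity
  rw [mem_itv hN, div_mul_cancel₀ _ hpos.ne']
  constructor <;> linarith

lemma left_mem_hd {N : ℕ} (hN : 2 ≤ N) (j : ℕ) (s : ℕ × ℕ) :
    (s.2 : ℝ) / (N : ℝ) ^ s.1 ∈ hd N j s := by
  have := left_mem_itv hN (s.1 + j) (s.2 * N ^ j)
  have e : ((s.2 * N ^ j : ℕ) : ℝ) / (N : ℝ) ^ (s.1 + j) = (s.2 : ℝ) / (N : ℝ) ^ s.1 := by
    push_cast
    rw [pow_add]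
    field_simp
  rwa [e] at this

lemma hd_anti {N : ℕ} (hN : 2 ≤ N) {i j : ℕ} (h : i ≤ j) (s : ℕ × ℕ) : hd N j s ⊆ hd N i s :=
  itv_nest hN (by omega) (left_mem_hd hN i s) (left_mem_hd hN j s)

lemma hd_sub {N : ℕ} (hN : 2 ≤ N) (j : ℕ) (s : ℕ × ℕ) : hd N j s ⊆ pc N s := by
  rw [← hd_zero]; exact hd_anti hN (Nat.zero_le _) s

lemma AA_zero (N : ℕ) (S : Set (ℕ × ℕ)) : AA N S 0 = ⋃ s ∈ S, pc N s := by
  simp [AA, hd_zero]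

lemma AA_anti {N : ℕ} (hN : 2 ≤ N) (S : Set (ℕ × ℕ)) {i j : ℕ} (h : i ≤ j) :
    AA N S j ⊆ AA N S i :=
  Set.iUnion₂_mono fun s _ => hd_anti hN h s

lemma meas_AA (N : ℕ) (S : Set (ℕ × ℕ)) (j : ℕ) : MeasurableSet (AA N S j) :=
  MeasurableSet.biUnion S.to_countable fun _ _ => meas_itv _ _ _

lemma vol_AA {N : ℕ} (hN : 2 ≤ N) {S : Set (ℕ × ℕ)} (hS : S.PairwiseDisjoint (pc N)) (j : ℕ)
    {J : Set ℝ} (hJ : MeasurableSet J) (hg : ∀ s ∈ S, pc N s ⊆ J ∨ Disjoint (pc N s) J) :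
    volume.real (AA N S j ∩ J) = ((N : ℝ) ^ j)⁻¹ * volume.real (AA N S 0 ∩ J) := by
  have key : ∀ i, volume (AA N S i ∩ J) = ∑' s : S, volume (hd N i s ∩ J) := by
    intro i
    rw [AA, Set.iUnion₂_inter, measure_biUnion S.to_countable]
    · intro s hs t ht hst
      exact (hS hs ht hst).mono (Set.inter_subset_left.trans (hd_sub hN _ _))
        (Set.inter_subset_left.trans (hd_sub hN _ _))
    · intro s _
      exact (meas_itv _ _ _).inter hJ
  have h2 : volume (AA N S j ∩ J) = ENNReal.ofReal (((N : ℝ) ^ j)⁻¹) * volume (AA N S 0 ∩ J) := by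
    rw [key, key, ← ENNReal.tsum_mul_left]
    congr 1
    ext s
    rcases hg s s.2 with h | h
    · rw [Set.inter_eq_left.2 ((hd_sub hN _ _).trans h),
        Set.inter_eq_left.2 ((hd_sub hN _ _).trans h), hd, hd, vol_itv, vol_itv,
        ← ENNReal.ofReal_mul (by positivity)]
      congr 1
      rw [pow_add, mul_inv, add_zero, mul_comm]
    · rw [(h.mono_left (hd_sub hN j s)).inter_eq, (h.mono_left (hd_sub hN 0 s)).inter_eq]
      simp
  rw [measureReal_def, h2, ENNReal.toReal_mul, ENNReal.toReal_ofReal (by positivity),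
    measureReal_def]

noncomputable def ph (N : ℕ) (S : Set (ℕ × ℕ)) (k : ℕ) (u θ β : ℝ) (x : ℝ) : ℝ :=
  (AA N S k).indicator (fun _ => u * (N : ℝ) ^ k) x + (Set.Ico θ β).indicator (fun _ => u) x

lemma ind_int {A J : Set ℝ} (hA : MeasurableSet A) (hJv : volume J ≠ ⊤) (c : ℝ) :
    IntegrableOn (A.indicator fun _ => c) J :=
  (integrableOn_const hJv).indicator hA

lemma int_ind {A J : Set ℝ} (hA : MeasurableSet A) (c : ℝ) :
    ∫ x in J, A.indicator (fun _ => c) x = c * volume.real (A ∩ J) := by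
  rw [integral_indicator hA, setIntegral_const, smul_eq_mul, mul_comm, measureReal_restrict_apply hA]

lemma vol_itv_ne (N m k : ℕ) : volume (adicItv N m k) ≠ ⊤ := by
  rw [vol_itv]; exact ENNReal.ofReal_ne_top

lemma ph_nonneg (N : ℕ) (S : Set (ℕ × ℕ)) (k : ℕ) {u θ β : ℝ} (hu : 0 < u) (x : ℝ) :
    0 ≤ ph N S k u θ β x :=
  add_nonneg (Set.indicator_nonneg (fun _ _ => by positivity) _)
    (Set.indicator_nonneg (fun _ _ => hu.le) _)

lemma ph_intOn (N : ℕ) (S : Set (ℕ × ℕ)) (k : ℕ) (u θ β : ℝ) {J : Set ℝ} (hJ : volume J ≠ ⊤) :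
    IntegrableOn (ph N S k u θ β) J :=
  (ind_int (meas_AA N S k) hJ _).add (ind_int measurableSet_Ico hJ _)

lemma ph_int (N : ℕ) (S : Set (ℕ × ℕ)) (k : ℕ) (u θ β : ℝ) {J : Set ℝ} (hJ : volume J ≠ ⊤) :
    ∫ x in J, ph N S k u θ β x =
      u * (N : ℝ) ^ k * volume.real (AA N S k ∩ J) + u * volume.real (Set.Ico θ β ∩ J) := by
  rw [← int_ind (meas_AA N S k), ← int_ind measurableSet_Ico]
  exact integral_add (ind_int (meas_AA N S k) hJ _) (ind_int measurableSet_Ico hJ _)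

/-- mass over compatible sets -/
lemma ph_int_good {N : ℕ} (hN : 2 ≤ N) {S : Set (ℕ × ℕ)} (hS : S.PairwiseDisjoint (pc N))
    (k : ℕ) {u θ β : ℝ} (hT : AA N S 0 = Set.Ico 0 θ) (h0 : 0 ≤ θ) (hθβ : θ ≤ β)
    {J : Set ℝ} (hJ : MeasurableSet J) (hJv : volume J ≠ ⊤)
    (hg : ∀ s ∈ S, pc N s ⊆ J ∨ Disjoint (pc N s) J) :
    ∫ x in J, ph N S k u θ β x = u * volume.real (Set.Ico 0 β ∩ J) := by
  rw [ph_int _ _ _ _ _ _ hJv, vol_AA hN hS k hJ hg, hT]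
  have : volume.real (Set.Ico 0 β ∩ J)
      = volume.real (Set.Ico 0 θ ∩ J) + volume.real (Set.Ico θ β ∩ J) := by
    rw [← Set.Ico_union_Ico_eq_Ico h0 hθβ, Set.union_inter_distrib_right]
    apply measureReal_union
    · apply Disjoint.mono Set.inter_subset_left Set.inter_subset_left
      rw [Set.disjoint_left]
      intro x hx hx'
      exact absurd hx.2 (not_lt.2 hx'.1)
    · exact measurableSet_Ico.inter hJ
    · exact measure_ne_top_of_subset Set.inter_subset_right hJv
    · exact measure_ne_top_of_subset Set.inter_subset_right hJv
  rw [this]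
  have : (N : ℝ) ^ k ≠ 0 := by positivity
  field_simp

lemma avg_eq {N : ℕ} {S : Set (ℕ × ℕ)} {k : ℕ} {u θ β : ℝ} (hu : 0 < u) (m l : ℕ) :
    adicAvg N (ph N S k u θ β) m l = (N : ℝ) ^ m * ∫ x in adicItv N m l, ph N S k u θ β x := by
  rw [adicAvg]
  congr 2
  ext x
  exact abs_of_nonneg (ph_nonneg N S k hu x)

lemma exists_count {N : ℕ} (hN : 2 ≤ N) (S : Set (ℕ × ℕ)) (k : ℕ) (x : ℝ) :
    ∃ c ≤ k, ∀ j, 1 ≤ j → j ≤ k → (x ∈ AA N S j ↔ j ≤ c) := by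
  classical
  refine ⟨Nat.findGreatest (fun j => x ∈ AA N S j) k, Nat.findGreatest_le k, ?_⟩
  intro j hj hjk
  constructor
  · intro h
    exact Nat.le_findGreatest hjk h
  · intro h
    have := Nat.findGreatest_of_ne_zero (P := fun j => x ∈ AA N S j) (n := k) rfl (by omega)
    exact AA_anti hN S h this

/-- pieces are compatible with pieces -/
lemma good_pc {N : ℕ} {S : Set (ℕ × ℕ)} (hS : S.PairwiseDisjoint (pc N))
    {t : ℕ × ℕ} (ht : t ∈ S) : ∀ s ∈ S, pc N s ⊆ pc N t ∨ Disjoint (pc N s) (pc N t) := by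
  intro s hs
  by_cases h : s = t
  · subst h; exact Or.inl subset_rfl
  · exact Or.inr (hS hs ht h)

lemma avg_le {N : ℕ} (hN : 2 ≤ N) {S : Set (ℕ × ℕ)} (hS : S.PairwiseDisjoint (pc N))
    {k : ℕ} {u θ β : ℝ} (hu : 0 < u) (hT : AA N S 0 = Set.Ico 0 θ) (h0 : 0 ≤ θ) (hθβ : θ ≤ β)
    {x : ℝ} {c : ℕ} (hck : c ≤ k) (hc : ∀ j, 1 ≤ j → j ≤ k → (x ∈ AA N S j ↔ j ≤ c))
    {m l : ℕ} (hx : x ∈ adicItv N m l) :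
    adicAvg N (ph N S k u θ β) m l ≤ u * (N : ℝ) ^ c := by
  have hN1 : (1 : ℝ) ≤ N := by exact_mod_cast (by omega : 1 ≤ N)
  have hpos : (0 : ℝ) < (N : ℝ) ^ m := by positivity
  rw [avg_eq hu]
  by_cases hg : ∀ s ∈ S, pc N s ⊆ adicItv N m l ∨ Disjoint (pc N s) (adicItv N m l)
  · rw [ph_int_good hN hS k hT h0 hθβ (meas_itv _ _ _) (vol_itv_ne _ _ _) hg]
    have h1 : volume.real (Set.Ico 0 β ∩ adicItv N m l) ≤ ((N : ℝ) ^ m)⁻¹ := by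
      rw [← volr_itv m l]
      exact measureReal_mono Set.inter_subset_right (vol_itv_ne _ _ _)
    calc (N : ℝ) ^ m * (u * volume.real (Set.Ico 0 β ∩ adicItv N m l))
        ≤ (N : ℝ) ^ m * (u * ((N : ℝ) ^ m)⁻¹) := by gcongr
      _ = u * 1 := by field_simp
      _ ≤ u * (N : ℝ) ^ c := by gcongr; exact one_le_pow₀ hN1
  · push Not at hg
    obtain ⟨s, hs, hns, hnd⟩ := hg
    obtain ⟨y, hy, hy'⟩ := Set.not_disjoint_iff.1 hnd
    have hlt : s.1 < m := by
      by_contra h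
      exact hns (itv_nest hN (not_lt.1 h) hy' hy)
    have hsub : adicItv N m l ⊆ pc N s := itv_nest hN hlt.le hy hy'
    have hpcT : pc N s ⊆ Set.Ico 0 θ := by
      rw [← hT, AA_zero]; exact Set.subset_biUnion_of_mem hs
    have hz : Set.Ico θ β ∩ adicItv N m l = ∅ := by
      ext z
      simp only [Set.mem_inter_iff, Set.mem_empty_iff_false, iff_false]
      rintro ⟨h1, h2⟩
      exact absurd (hpcT (hsub h2)).2 (not_lt.2 h1.1)
    rcases hck.eq_or_lt with rfl | hck
    · rw [ph_int _ _ _ _ _ _ (vol_itv_ne _ _ _), hz]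
      have h1 : volume.real (AA N S c ∩ adicItv N m l) ≤ ((N : ℝ) ^ m)⁻¹ := by
        rw [← volr_itv m l]
        exact measureReal_mono Set.inter_subset_right (vol_itv_ne _ _ _)
      calc (N : ℝ) ^ m * (u * (N : ℝ) ^ c * volume.real (AA N S c ∩ adicItv N m l)
            + u * volume.real (∅ : Set ℝ))
          ≤ (N : ℝ) ^ m * (u * (N : ℝ) ^ c * ((N : ℝ) ^ m)⁻¹ + u * volume.real (∅ : Set ℝ)) := by
            gcongr
        _ = u * (N : ℝ) ^ c := by simp; field_simp
    · have hxn : x ∉ AA N S (c + 1) := by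
        rw [hc (c + 1) (by omega) hck]; omega
      rcases le_or_gt m (s.1 + c) with hm | hm
      · have h1 : ∫ x in adicItv N m l, ph N S k u θ β x ≤ ∫ x in pc N s, ph N S k u θ β x := by
          apply setIntegral_mono_set (ph_intOn _ _ _ _ _ _ (vol_itv_ne _ _ _))
          · exact Eventually.of_forall fun x => ph_nonneg N S k hu x
          · exact Eventually.of_forall hsub
        have h2 : ∫ x in pc N s, ph N S k u θ β x ≤ u * ((N : ℝ) ^ s.1)⁻¹ := by
          rw [ph_int_good hN hS k hT h0 hθβ (J := pc N s) (meas_itv _ _ _)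
            (vol_itv_ne _ _ _) (good_pc hS hs)]
          gcongr
          rw [← volr_itv s.1 s.2]
          exact measureReal_mono Set.inter_subset_right (vol_itv_ne _ _ _)
        calc _ ≤ (N : ℝ) ^ m * (u * ((N : ℝ) ^ s.1)⁻¹) := by gcongr; exact h1.trans h2
          _ ≤ (N : ℝ) ^ (s.1 + c) * (u * ((N : ℝ) ^ s.1)⁻¹) := by gcongr
          _ = u * (N : ℝ) ^ c := by rw [pow_add]; field_simp
      · have he : AA N S k ∩ adicItv N m l = ∅ := by
          ext z
          simp only [Set.mem_inter_iff, Set.mem_empty_iff_false, iff_false]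
          rintro ⟨h1, h2⟩
          have h1' := AA_anti hN S hck h1
          simp only [AA, Set.mem_iUnion, exists_prop] at h1'
          obtain ⟨t, ht, hzt⟩ := h1'
          apply hxn
          simp only [AA, Set.mem_iUnion, exists_prop]
          have : t = s := by
            by_contra hne
            exact Set.disjoint_left.1 (hS ht hs hne) (hd_sub hN _ _ hzt) (hsub h2)
          subst this
          exact ⟨t, ht, itv_nest hN (by omega) hzt h2 hx⟩
        rw [ph_int _ _ _ _ _ _ (vol_itv_ne _ _ _), hz, he]
        simp
        positivity

lemma le_avg {N : ℕ} (hN : 2 ≤ N) {S : Set (ℕ × ℕ)} (hS : S.PairwiseDisjoint (pc N))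
    {k : ℕ} {u θ β : ℝ} (hu : 0 < u) (hT : AA N S 0 = Set.Ico 0 θ) (h0 : 0 ≤ θ) (hθβ : θ ≤ β)
    {x : ℝ} {c : ℕ} (hck : c ≤ k) (hc : ∀ j, 1 ≤ j → j ≤ k → (x ∈ AA N S j ↔ j ≤ c))
    (hx : x ∈ Set.Ico 0 β) :
    ∃ m l : ℕ, x ∈ adicItv N m l ∧ u * (N : ℝ) ^ c ≤ adicAvg N (ph N S k u θ β) m l := by
  by_cases hxT : x ∈ AA N S 0
  · have hxc : x ∈ AA N S c := by
      rcases Nat.eq_zero_or_pos c with rfl | h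
      · exact hxT
      · exact (hc c h hck).2 le_rfl
    simp only [AA, Set.mem_iUnion, exists_prop] at hxc
    obtain ⟨s, hs, hxs⟩ := hxc
    refine ⟨_, _, hxs, ?_⟩
    rw [avg_eq hu, ph_int _ _ _ _ _ _ (vol_itv_ne _ _ _)]
    have h1 : ((N : ℝ) ^ (s.1 + k))⁻¹ ≤
        volume.real (AA N S k ∩ adicItv N (s.1 + c) (s.2 * N ^ c)) := by
      rw [← volr_itv (s.1 + k) (s.2 * N ^ k)]
      apply measureReal_mono _ (measure_ne_top_of_subset Set.inter_subset_right (vol_itv_ne _ _ _))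
      apply Set.subset_inter
      · exact Set.subset_biUnion_of_mem (u := fun s => hd N k s) hs
      · exact hd_anti hN hck s
    calc u * (N : ℝ) ^ c
        = (N : ℝ) ^ (s.1 + c) * (u * (N : ℝ) ^ k * ((N : ℝ) ^ (s.1 + k))⁻¹ + 0) := by
          have : (N : ℝ) ≠ 0 := by positivity
          rw [pow_add, pow_add]; field_simp; simp
      _ ≤ _ := by gcongr; positivity
  · obtain ⟨m, l, hxm, hsub⟩ := exists_itv hN hx
    have hc0 : c = 0 := by
      by_contra h
      exact hxT (AA_anti hN S (Nat.zero_le c) ((hc c (by omega) hck).2 le_rfl))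
    refine ⟨m, l, hxm, ?_⟩
    rw [avg_eq hu, ph_int_good hN hS k hT h0 hθβ (meas_itv _ _ _) (vol_itv_ne _ _ _),
      Set.inter_eq_right.2 hsub, volr_itv, hc0]
    · have : (N : ℝ) ^ m ≠ 0 := by positivity
      apply le_of_eq
      field_simp
    · intro s hs
      by_cases hd : Disjoint (pc N s) (adicItv N m l)
      · exact Or.inr hd
      · left
        obtain ⟨y, hy, hy'⟩ := Set.not_disjoint_iff.1 hd
        rcases le_total m s.1 with h | h
        · exact itv_nest hN h hy' hy
        · exfalso
          apply hxT
          rw [AA_zero]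
          exact Set.mem_biUnion hs (itv_nest hN h hy hy' hxm)

lemma adm_le {N : ℕ} (hN : 2 ≤ N) {S : Set (ℕ × ℕ)} (hS : S.PairwiseDisjoint (pc N))
    {k : ℕ} {u θ β : ℝ} (hu : 0 < u) (hT : AA N S 0 = Set.Ico 0 θ) (h0 : 0 ≤ θ) (hθβ : θ ≤ β)
    {x : ℝ} {c : ℕ} (hck : c ≤ k) (hc : ∀ j, 1 ≤ j → j ≤ k → (x ∈ AA N S j ↔ j ≤ c)) :
    adicMax N (ph N S k u θ β) x ≤ u * (N : ℝ) ^ c := by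
  apply Real.sSup_le
  · rintro r ⟨m, l, -, hx, rfl⟩
    exact avg_le hN hS hu hT h0 hθβ hck hc hx
  · positivity

lemma adm_nonneg (N : ℕ) (φ : ℝ → ℝ) (x : ℝ) : 0 ≤ adicMax N φ x := by
  apply Real.sSup_nonneg
  rintro r ⟨m, l, -, hx, rfl⟩
  exact mul_nonneg (by positivity) (integral_nonneg fun _ => abs_nonneg _)

lemma adm_eq {N : ℕ} (hN : 2 ≤ N) {S : Set (ℕ × ℕ)} (hS : S.PairwiseDisjoint (pc N))
    {k : ℕ} {u θ β : ℝ} (hu : 0 < u) (hT : AA N S 0 = Set.Ico 0 θ) (h0 : 0 ≤ θ) (hθβ : θ ≤ β)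
    {x : ℝ} {c : ℕ} (hck : c ≤ k) (hc : ∀ j, 1 ≤ j → j ≤ k → (x ∈ AA N S j ↔ j ≤ c))
    (hx : x ∈ Set.Ico 0 β) (hx1 : x < 1) :
    adicMax N (ph N S k u θ β) x = u * (N : ℝ) ^ c := by
  apply le_antisymm (adm_le hN hS hu hT h0 hθβ hck hc)
  obtain ⟨m, l, hxm, hle⟩ := le_avg hN hS hu hT h0 hθβ hck hc hx
  refine hle.trans (le_csSup ?_ ⟨m, l, itv_index hN hx1 hxm, hxm, rfl⟩)
  refine ⟨u * (N : ℝ) ^ c, ?_⟩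
  rintro r ⟨m, l, -, hx, rfl⟩
  exact avg_le hN hS hu hT h0 hθβ hck hc hx

noncomputable def hh (N : ℕ) (S : Set (ℕ × ℕ)) (k : ℕ) (u p : ℝ) (x : ℝ) : ℝ :=
  u ^ p + ∑ j ∈ Finset.range k, (AA N S (j + 1)).indicator
    (fun _ => u ^ p * (((N : ℝ) ^ p) ^ (j + 1) - ((N : ℝ) ^ p) ^ j)) x

lemma hh_eq {N : ℕ} {S : Set (ℕ × ℕ)} {k : ℕ} {u p : ℝ} (hu : 0 < u)
    {x : ℝ} {c : ℕ} (hck : c ≤ k) (hc : ∀ j, 1 ≤ j → j ≤ k → (x ∈ AA N S j ↔ j ≤ c)) :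
    hh N S k u p x = (u * (N : ℝ) ^ c) ^ p := by
  classical
  have h1 : ∑ j ∈ Finset.range k, (AA N S (j + 1)).indicator
      (fun _ => u ^ p * (((N : ℝ) ^ p) ^ (j + 1) - ((N : ℝ) ^ p) ^ j)) x =
      ∑ j ∈ Finset.range c, u ^ p * (((N : ℝ) ^ p) ^ (j + 1) - ((N : ℝ) ^ p) ^ j) := by
    symm
    apply Finset.sum_subset_zero_on_sdiff (Finset.range_mono hck)
    · intro j hj
      simp only [Finset.mem_sdiff, Finset.mem_range] at hj
      apply Set.indicator_of_notMem
      rw [hc (j + 1) (by omega) (by omega)]; omega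
    · intro j hj
      simp only [Finset.mem_range] at hj
      rw [Set.indicator_of_mem]
      rw [hc (j + 1) (by omega) (by omega)]; omega
  rw [hh, h1, ← Finset.mul_sum, Finset.sum_range_sub, Real.mul_rpow hu.le (by positivity),
    ← Real.rpow_natCast (N : ℝ) c, ← Real.rpow_mul (by positivity), mul_comm (c : ℝ) p,
    Real.rpow_mul (by positivity), Real.rpow_natCast]
  ring

lemma hh_intOn (N : ℕ) (S : Set (ℕ × ℕ)) (k : ℕ) (u p : ℝ) {J : Set ℝ} (hJ : volume J ≠ ⊤) :
    IntegrableOn (hh N S k u p) J :=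
  (integrableOn_const hJ).add (integrable_finsetSum _ fun j _ => ind_int (meas_AA N S _) hJ _)

lemma hh_int (N : ℕ) (S : Set (ℕ × ℕ)) (k : ℕ) (u p : ℝ) {J : Set ℝ} (hJ : volume J ≠ ⊤) :
    ∫ x in J, hh N S k u p x = u ^ p * volume.real J + ∑ j ∈ Finset.range k,
      u ^ p * (((N : ℝ) ^ p) ^ (j + 1) - ((N : ℝ) ^ p) ^ j) * volume.real (AA N S (j + 1) ∩ J) := by
  simp only [hh]
  have hi : IntegrableOn (fun _ : ℝ => u ^ p) J := integrableOn_const hJ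
  rw [integral_add hi
    (integrable_finsetSum _ fun j _ => ind_int (meas_AA N S _) hJ _),
    integral_finsetSum _ fun j _ => ind_int (meas_AA N S _) hJ _, setIntegral_const, smul_eq_mul,
    mul_comm]
  congr 1
  exact Finset.sum_congr rfl fun j _ => int_ind (meas_AA N S _) _

lemma ph_rpow {N : ℕ} (hN : 2 ≤ N) {S : Set (ℕ × ℕ)} {k : ℕ} {u θ β p : ℝ} (hu : 0 < u)
    (hp : 1 < p) (hT : AA N S 0 = Set.Ico 0 θ) (x : ℝ) :
    ph N S k u θ β x ^ p = (AA N S k).indicator (fun _ => u ^ p * ((N : ℝ) ^ p) ^ k) x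
      + (Set.Ico θ β).indicator (fun _ => u ^ p) x := by
  rw [ph]
  by_cases h : x ∈ AA N S k
  · have h2 : x ∉ Set.Ico θ β := by
      have := AA_anti hN S (Nat.zero_le k) h
      rw [hT] at this
      exact fun h' => absurd this.2 (not_lt.2 h'.1)
    simp only [Set.indicator_of_mem h, Set.indicator_of_notMem h2, add_zero]
    rw [Real.mul_rpow hu.le (by positivity),
      ← Real.rpow_natCast, ← Real.rpow_natCast, ← Real.rpow_mul (by positivity),
      ← Real.rpow_mul (by positivity), mul_comm p]
  · simp only [Set.indicator_of_notMem h, zero_add]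
    by_cases h2 : x ∈ Set.Ico θ β
    · simp only [Set.indicator_of_mem h2]
    · simp only [Set.indicator_of_notMem h2]
      exact Real.zero_rpow (by linarith)

lemma sum_id {n X θ : ℝ} (hn : 0 < n) (hX : n < X) (k : ℕ) :
    ∑ j ∈ Finset.range k, (X ^ (j + 1) - X ^ j) * ((n ^ (j + 1))⁻¹ * θ)
      = (X - 1) / (X - n) * (θ * ((X / n) ^ k - 1)) := by
  have h1 : ∀ j ∈ Finset.range k, (X ^ (j + 1) - X ^ j) * ((n ^ (j + 1))⁻¹ * θ)
      = (X - 1) / n * θ * (X / n) ^ j := by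
    intro j _
    rw [div_pow, pow_succ, pow_succ]
    field_simp
  have hr : X / n ≠ 1 := by
    rw [Ne, div_eq_one_iff_eq hn.ne']; exact hX.ne'
  rw [Finset.sum_congr rfl h1, ← Finset.mul_sum, geom_sum_eq hr]
  have h2 : X / n - 1 = (X - n) / n := by field_simp
  have h3 : X - n ≠ 0 := (sub_pos.2 hX).ne'
  rw [h2]
  field_simp

theorem stmt7 (N : ℕ) (hN : 2 ≤ N) (p f F κ : ℝ) (hp : 1 < p)
    (hf : 0 < f) (hF : 0 < F) (hfF : f ^ p ≤ F) (hκ : κ ∈ Set.Ioc (0:ℝ) 1)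
    (u₀ : ℝ) (hu₀f : f ≤ u₀) (hu₀ : u₀ ≤ min ((F / f) ^ (1 / (p - 1))) (f / κ)) :
    ∃ φ : ℝ → ℝ, Measurable φ ∧ (∀ x ∈ Set.Ico (0:ℝ) 1, 0 ≤ φ x) ∧
      (∫ x in Set.Ico (0:ℝ) 1, φ x) = f ∧ (∫ x in Set.Ico (0:ℝ) 1, φ x ^ p) = F ∧
      supMeas N p κ φ =
        κ * u₀ ^ p + (((N : ℝ) ^ p - 1) / ((N : ℝ) ^ p - N)) * (F - u₀ ^ (p - 1) * f) := by
  have hu : 0 < u₀ := hf.trans_le hu₀f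
  have hn : (0 : ℝ) < N := by positivity
  have hN1 : (1 : ℝ) < N := by exact_mod_cast hN
  have hX : (N : ℝ) < (N : ℝ) ^ p := by
    simpa using Real.rpow_lt_rpow_of_exponent_lt hN1 hp
  have hup : 0 < u₀ ^ p := Real.rpow_pos_of_pos hu p
  have hup1 : u₀ ^ (p - 1) = u₀ ^ p / u₀ := Real.rpow_sub_one hu.ne' p
  have hA : u₀ ^ (p - 1) ≤ F / f := by
    have h := hu₀.trans (min_le_left _ _)
    have := Real.rpow_le_rpow hu.le h (by linarith : 0 ≤ p - 1)
    rwa [← Real.rpow_mul (by positivity), one_div_mul_cancel (by linarith), Real.rpow_one] at this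
  have hβκ : κ ≤ f / u₀ := by
    have h := hu₀.trans (min_le_right _ _)
    rw [le_div_iff₀ hκ.1] at h
    rw [le_div_iff₀ hu]; linarith
  have hβ1 : f / u₀ ≤ 1 := (div_le_one hu).2 hu₀f
  obtain ⟨D, hD⟩ : ∃ D, D = F / u₀ ^ p - f / u₀ := ⟨_, rfl⟩
  have hD0 : 0 ≤ D := by
    rw [hD, sub_nonneg, div_le_div_iff₀ hu hup]
    rw [hup1, div_le_div_iff₀ hu hf] at hA
    linarith
  have hDe : u₀ ^ p * D = F - u₀ ^ (p - 1) * f := by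
    rw [hD, hup1]; field_simp
  have hr : 1 < (N : ℝ) ^ p / N := (one_lt_div hn).2 hX
  obtain ⟨k, hk⟩ := pow_unbounded_of_one_lt (1 + D / κ) hr
  have hDκ : 0 ≤ D / κ := div_nonneg hD0 hκ.1.le
  have hden : 0 < ((N : ℝ) ^ p / N) ^ k - 1 := by linarith
  obtain ⟨θ, hθ⟩ : ∃ θ, θ = D / (((N : ℝ) ^ p / N) ^ k - 1) := ⟨_, rfl⟩
  have hθD : θ * (((N : ℝ) ^ p / N) ^ k - 1) = D := by
    rw [hθ]; field_simp
  have hθ0 : 0 ≤ θ := by rw [hθ]; positivity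
  have hθκ : θ ≤ κ := by
    rw [hθ, div_le_iff₀ hden, ← div_le_iff₀' hκ.1]; linarith
  clear hθ
  obtain ⟨β, hβ⟩ : ∃ β, β = f / u₀ := ⟨_, rfl⟩
  rw [← hβ] at hβκ hβ1 hD
  have hθβ : θ ≤ β := hθκ.trans hβκ
  obtain ⟨S, hS, hT⟩ := exists_S hN θ
  rw [← AA_zero] at hT
  have hgood : ∀ b, θ ≤ b → ∀ s ∈ S, pc N s ⊆ Set.Ico 0 b ∨ Disjoint (pc N s) (Set.Ico 0 b) := by
    intro b hb s hs
    left
    have : pc N s ⊆ Set.Ico 0 θ := by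
      rw [← hT, AA_zero]; exact Set.subset_biUnion_of_mem hs
    exact this.trans (Set.Ico_subset_Ico_right hb)
  have hvA : ∀ j b, θ ≤ b → volume.real (AA N S j ∩ Set.Ico 0 b) = ((N : ℝ) ^ j)⁻¹ * θ := by
    intro j b hb
    rw [vol_AA hN hS j measurableSet_Ico (hgood b hb), hT,
      Set.inter_eq_left.2 (Set.Ico_subset_Ico_right hb), Real.volume_real_Ico_of_le hθ0, sub_zero]
  have hv01 : volume (Set.Ico (0:ℝ) 1) ≠ ⊤ := by simp
  have hθ1 : θ ≤ 1 := hθβ.trans hβ1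
  have hβ0 : 0 ≤ β := hθ0.trans hθβ
  -- the extremal value
  have hval : u₀ ^ p * κ + ∑ j ∈ Finset.range k,
      u₀ ^ p * (((N : ℝ) ^ p) ^ (j + 1) - ((N : ℝ) ^ p) ^ j) * (((N : ℝ) ^ (j + 1))⁻¹ * θ)
      = κ * u₀ ^ p + (((N : ℝ) ^ p - 1) / ((N : ℝ) ^ p - N)) * (F - u₀ ^ (p - 1) * f) := by
    simp_rw [mul_assoc (u₀ ^ p)]
    rw [← Finset.mul_sum, sum_id hn hX, hθD, ← hDe]
    ring
  refine ⟨ph N S k u₀ θ β, ?_, fun x _ => ph_nonneg N S k hu x, ?_, ?_, ?_⟩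
  · exact (measurable_const.indicator (meas_AA N S k)).add
      (measurable_const.indicator measurableSet_Ico)
  · rw [ph_int_good hN hS k hT hθ0 hθβ measurableSet_Ico hv01 (hgood 1 hθ1),
      Set.inter_eq_left.2 (Set.Ico_subset_Ico_right hβ1), Real.volume_real_Ico_of_le hβ0, hβ]
    field_simp
    simp
  · simp_rw [ph_rpow hN hu hp hT]
    rw [integral_add (ind_int (meas_AA N S k) hv01 _) (ind_int measurableSet_Ico hv01 _),
      int_ind (meas_AA N S k), int_ind measurableSet_Ico, hvA k 1 hθ1,
      Set.inter_eq_left.2 (Set.Ico_subset_Ico hθ0 hβ1), Real.volume_real_Ico_of_le hθβ]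
    have h1 : u₀ ^ p * ((N : ℝ) ^ p) ^ k * (((N : ℝ) ^ k)⁻¹ * θ)
        = u₀ ^ p * (θ * (((N : ℝ) ^ p / N) ^ k - 1)) + u₀ ^ p * θ := by
      rw [div_pow]; field_simp; ring
    rw [h1, hθD, hD]
    field_simp
    ring
  · rw [supMeas, ← hval]
    apply IsGreatest.csSup_eq
    constructor
    · refine ⟨Set.Ico 0 κ, measurableSet_Ico, Set.Ico_subset_Ico_right hκ.2, by simp, ?_⟩
      have h1 : ∫ x in Set.Ico 0 κ, adicMax N (ph N S k u₀ θ β) x ^ p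
          = ∫ x in Set.Ico 0 κ, hh N S k u₀ p x := by
        apply setIntegral_congr_fun measurableSet_Ico
        intro x hx
        obtain ⟨c, hck, hc⟩ := exists_count hN S k x
        simp only
        rw [hh_eq hu hck hc, adm_eq hN hS hu hT hθ0 hθβ hck hc ⟨hx.1, hx.2.trans_le hβκ⟩
          (hx.2.trans_le hκ.2)]
      rw [h1, hh_int _ _ _ _ _ (by simp), Real.volume_real_Ico_of_le hκ.1.le, sub_zero]
      congr 1
      exact Finset.sum_congr rfl fun j _ => by rw [hvA _ _ hθκ]
    · rintro z ⟨E, hE, hE1, hEv, rfl⟩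
      have hEt : volume E ≠ ⊤ := by rw [hEv]; exact ENNReal.ofReal_ne_top
      have h1 : ∫ x in E, adicMax N (ph N S k u₀ θ β) x ^ p ≤ ∫ x in E, hh N S k u₀ p x := by
        apply integral_mono_of_nonneg
        · exact Eventually.of_forall fun x => Real.rpow_nonneg (adm_nonneg _ _ _) _
        · exact hh_intOn _ _ _ _ _ hEt
        · refine Eventually.of_forall fun x => ?_
          obtain ⟨c, hck, hc⟩ := exists_count hN S k x
          simp only
          rw [hh_eq hu hck hc]
          exact Real.rpow_le_rpow (adm_nonneg _ _ _) (adm_le hN hS hu hT hθ0 hθβ hck hc)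
            (by linarith)
      refine h1.trans ?_
      rw [hh_int _ _ _ _ _ hEt]
      have h2 : volume.real E = κ := by
        rw [measureReal_def, hEv, ENNReal.toReal_ofReal hκ.1.le]
      rw [h2]
      gcongr with j hj
      · apply mul_nonneg hup.le
        rw [sub_nonneg]
        exact pow_le_pow_right₀ (by linarith) (by omega)
      · rw [← hvA (j + 1) 1 hθ1]
        exact measureReal_mono (Set.inter_subset_inter_right _ hE1)
          (measure_ne_top_of_subset Set.inter_subset_right hv01)
end

section
/- Let N ≥ 2 and m ≥ 0 be integers, let q > 1, and let φ = N^m · χ_{[0, N^{−m})} on [0,1). Then ∫_{[0,1)} (M_N φ)^q dμ = 1 + ((N^q − 1)/(N^q − N)) · (N^{m(q−1)} − 1). -/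
open MeasureTheory Set Filter

lemma avg_formula (N : ℕ) (hN : 2 ≤ N) (m : ℕ) (i k : ℕ) :
    adicAvg N (Set.indicator (Set.Ico (0:ℝ) (1 / (N : ℝ) ^ m)) (fun _ => (N : ℝ) ^ m)) i k =
      (N : ℝ) ^ i * ((N : ℝ) ^ m *
        max (min (((k : ℝ) + 1) / (N : ℝ) ^ i) (1 / (N : ℝ) ^ m) - (k : ℝ) / (N : ℝ) ^ i) 0) := by
  have ha : (0:ℝ) < N := by exact_mod_cast (by omega : 0 < N)
  have h1 : ∀ y, |Set.indicator (Set.Ico (0:ℝ) (1 / (N : ℝ) ^ m)) (fun _ => (N : ℝ) ^ m) y| =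
      Set.indicator (Set.Ico (0:ℝ) (1 / (N : ℝ) ^ m)) (fun _ => (N : ℝ) ^ m) y := fun y =>
    abs_of_nonneg (Set.indicator_nonneg (fun _ _ => by positivity) y)
  unfold adicAvg adicItv
  simp only [h1]
  rw [setIntegral_indicator measurableSet_Ico, Set.Ico_inter_Ico, setIntegral_const,
    Real.volume_real_Ico, smul_eq_mul, sup_eq_left.2 (by positivity : (0:ℝ) ≤ (k:ℝ) / (N:ℝ)^i)]
  congr 1
  rw [mul_comm]

lemma avg_le_m (N : ℕ) (hN : 2 ≤ N) (m : ℕ) (i k : ℕ) :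
    adicAvg N (Set.indicator (Set.Ico (0:ℝ) (1 / (N : ℝ) ^ m)) (fun _ => (N : ℝ) ^ m)) i k
      ≤ (N:ℝ)^m := by
  have ha : (0:ℝ) < N := by exact_mod_cast (by omega : 0 < N)
  rw [avg_formula N hN]
  have : max (min (((k : ℝ) + 1) / (N : ℝ) ^ i) (1 / (N : ℝ) ^ m) - (k : ℝ) / (N : ℝ) ^ i) 0
      ≤ 1 / (N:ℝ)^i := by
    apply max_le _ (by positivity)
    have := min_le_left (((k : ℝ) + 1) / (N : ℝ) ^ i) (1 / (N : ℝ) ^ m)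
    have h2 := add_div (k:ℝ) 1 ((N:ℝ)^i)
    linarith
  calc _ ≤ (N : ℝ) ^ i * ((N : ℝ) ^ m * (1 / (N:ℝ)^i)) := by gcongr
    _ = _ := by field_simp

lemma avg_le_i (N : ℕ) (hN : 2 ≤ N) (m : ℕ) (i k : ℕ) :
    adicAvg N (Set.indicator (Set.Ico (0:ℝ) (1 / (N : ℝ) ^ m)) (fun _ => (N : ℝ) ^ m)) i k
      ≤ (N:ℝ)^i := by
  have ha : (0:ℝ) < N := by exact_mod_cast (by omega : 0 < N)
  rw [avg_formula N hN]
  have : max (min (((k : ℝ) + 1) / (N : ℝ) ^ i) (1 / (N : ℝ) ^ m) - (k : ℝ) / (N : ℝ) ^ i) 0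
      ≤ 1 / (N:ℝ)^m := by
    apply max_le _ (by positivity)
    have := min_le_right (((k : ℝ) + 1) / (N : ℝ) ^ i) (1 / (N : ℝ) ^ m)
    have h2 : (0:ℝ) ≤ (k:ℝ) / (N:ℝ)^i := by positivity
    linarith
  calc _ ≤ (N : ℝ) ^ i * ((N : ℝ) ^ m * (1 / (N:ℝ)^m)) := by gcongr
    _ = _ := by field_simp

lemma avg_zero_idx (N : ℕ) (hN : 2 ≤ N) (m i : ℕ) (him : i ≤ m) :
    adicAvg N (Set.indicator (Set.Ico (0:ℝ) (1 / (N : ℝ) ^ m)) (fun _ => (N : ℝ) ^ m)) i 0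
      = (N:ℝ)^i := by
  have ha : (1:ℝ) ≤ N := by exact_mod_cast (by omega : 1 ≤ N)
  have ha0 : (0:ℝ) < N := by linarith
  rw [avg_formula N hN]
  have h : 1 / (N:ℝ)^m ≤ 1 / (N:ℝ)^i := by
    gcongr
  have h' : (0:ℝ) ≤ 1 / (N:ℝ)^m := by positivity
  simp only [Nat.cast_zero, zero_add, zero_div, sub_zero]
  rw [min_eq_right h, max_eq_left h']
  field_simp

lemma mem_zero_idx (N : ℕ) (i : ℕ) (x : ℝ) (h0 : 0 ≤ x)
    (h1 : x < 1 / (N:ℝ)^i) : x ∈ adicItv N i 0 := by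
  unfold adicItv
  simp only [Nat.cast_zero, zero_add, zero_div]
  exact ⟨h0, h1⟩

lemma max_inner (N : ℕ) (hN : 2 ≤ N) (m : ℕ) (x : ℝ) (h0 : 0 ≤ x) (h1 : x < 1 / (N:ℝ)^m) :
    adicMax N (Set.indicator (Set.Ico (0:ℝ) (1 / (N : ℝ) ^ m)) (fun _ => (N : ℝ) ^ m)) x
      = (N:ℝ)^m := by
  apply IsGreatest.csSup_eq
  constructor
  · exact ⟨m, 0, by positivity, mem_zero_idx N m x h0 h1, (avg_zero_idx N hN m m le_rfl).symm⟩
  · rintro r ⟨i, k, -, -, rfl⟩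
    exact avg_le_m N hN m i k

lemma max_outer (N : ℕ) (hN : 2 ≤ N) (m j : ℕ) (hj : j < m) (x : ℝ)
    (h0 : 1 / (N:ℝ)^(j+1) ≤ x) (h1 : x < 1 / (N:ℝ)^j) :
    adicMax N (Set.indicator (Set.Ico (0:ℝ) (1 / (N : ℝ) ^ m)) (fun _ => (N : ℝ) ^ m)) x
      = (N:ℝ)^j := by
  have ha : (1:ℝ) ≤ N := by exact_mod_cast (by omega : 1 ≤ N)
  have ha0 : (0:ℝ) < N := by linarith
  have hx : 0 ≤ x := le_trans (by positivity) h0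
  apply IsGreatest.csSup_eq
  constructor
  · exact ⟨j, 0, by positivity, mem_zero_idx N j x hx h1, (avg_zero_idx N hN m j hj.le).symm⟩
  · rintro r ⟨i, k, -, hk, rfl⟩
    by_cases hij : i ≤ j
    · exact (avg_le_i N hN m i k).trans (pow_le_pow_right₀ ha hij)
    · obtain ⟨d, rfl⟩ : ∃ d, i = (j + 1) + d := ⟨i - (j+1), by omega⟩
      have h2 := hk.2
      have h3 : 1 / (N:ℝ)^(j+1) < ((k:ℝ) + 1) / (N:ℝ)^(j+1+d) := lt_of_le_of_lt h0 h2
      rw [pow_add _ (j+1) d, div_lt_div_iff₀ (by positivity) (by positivity)] at h3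
      have h4 : (N:ℝ)^d < (k:ℝ) + 1 := by
        have hp : (0:ℝ) < (N:ℝ)^(j+1) := by positivity
        nlinarith
      have h5 : N^d < k + 1 := by exact_mod_cast h4
      have h6 : (N:ℝ)^d ≤ k := by exact_mod_cast (Nat.lt_succ_iff.1 h5)
      have h7 : 1 / (N:ℝ)^m ≤ 1 / (N:ℝ)^(j+1) := by
        gcongr
        · exact hj
      have h8 : 1 / (N:ℝ)^(j+1) ≤ (k:ℝ) / (N:ℝ)^(j+1+d) := by
        rw [pow_add _ (j+1) d, div_le_div_iff₀ (by positivity) (by positivity)]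
        have hp : (0:ℝ) < (N:ℝ)^(j+1) := by positivity
        nlinarith
      rw [avg_formula N hN, max_eq_right]
      · simp only [mul_zero]; positivity
      · have := min_le_right (((k : ℝ) + 1) / (N : ℝ) ^ (j+1+d)) (1 / (N : ℝ) ^ m)
        linarith

lemma const_piece (f : ℝ → ℝ) (a b c : ℝ) (hab : a ≤ b) (h : ∀ x, a ≤ x → x < b → f x = c) :
    IntegrableOn f (Set.Ico a b) ∧ ∫ x in Set.Ico a b, f x = c * (b - a) := by
  have hE : EqOn f (fun _ => c) (Set.Ico a b) := fun x hx => h x hx.1 hx.2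
  constructor
  · rw [integrableOn_congr_fun hE measurableSet_Ico]
    exact integrableOn_const (by simp)
  · rw [setIntegral_congr_fun measurableSet_Ico hE, setIntegral_const,
      Real.volume_real_Ico_of_le hab, smul_eq_mul, mul_comm]

lemma glue (f : ℝ → ℝ) (a b c u v : ℝ) (hab : a ≤ b) (hbc : b ≤ c)
    (h1 : IntegrableOn f (Set.Ico a b) ∧ ∫ x in Set.Ico a b, f x = u)
    (h2 : IntegrableOn f (Set.Ico b c) ∧ ∫ x in Set.Ico b c, f x = v) :
    IntegrableOn f (Set.Ico a c) ∧ ∫ x in Set.Ico a c, f x = u + v := by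
  rw [← Set.Ico_union_Ico_eq_Ico hab hbc]
  refine ⟨h1.1.union h2.1, ?_⟩
  rw [setIntegral_union (Set.Ico_disjoint_Ico_same) measurableSet_Ico h1.1 h2.1, h1.2, h2.2]

theorem stmt15 (N : ℕ) (hN : 2 ≤ N) (m : ℕ) (q : ℝ) (hq : 1 < q)
    (φ : ℝ → ℝ) (hφ : φ = Set.indicator (Set.Ico (0:ℝ) (1 / (N : ℝ) ^ m))
      (fun _ => (N : ℝ) ^ m)) :
    (∫ x in Set.Ico (0:ℝ) 1, adicMax N φ x ^ q) =
      1 + (((N : ℝ) ^ q - 1) / ((N : ℝ) ^ q - N)) *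
        ((N : ℝ) ^ ((m : ℝ) * (q - 1)) - 1) := by
  subst hφ
  have ha1 : (1:ℝ) < N := by exact_mod_cast (by omega : 1 < N)
  have ha : (0:ℝ) < N := by linarith
  obtain ⟨A, hA⟩ : ∃ A, A = (N:ℝ)^(q-1) := ⟨_, rfl⟩
  have hA1 : 1 < A := hA ▸ Real.one_lt_rpow ha1 (by linarith)
  have hNq : (N:ℝ)^q = A * N := by
    rw [hA, Real.rpow_sub_one ha.ne']; field_simp
  have hmq : (N:ℝ)^((m:ℝ)*(q-1)) = A^m := by
    rw [hA, mul_comm, Real.rpow_mul ha.le, Real.rpow_natCast]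
  have hpow : ∀ j : ℕ, ((N:ℝ)^j)^q = A^j * (N:ℝ)^j := by
    intro j
    rw [← mul_pow, ← hNq, ← Real.rpow_natCast, ← Real.rpow_natCast, ← Real.rpow_mul ha.le,
      ← Real.rpow_mul ha.le, mul_comm]
  have hle1 : ∀ t : ℕ, 1 / (N:ℝ)^t ≤ 1 := fun t => by
    rw [div_le_one (by positivity)]; exact one_le_pow₀ ha1.le
  set f : ℝ → ℝ := fun x => adicMax N (Set.indicator (Set.Ico (0:ℝ) (1 / (N : ℝ) ^ m))
      (fun _ => (N : ℝ) ^ m)) x ^ q with hf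
  have key : ∀ t : ℕ, t ≤ m → IntegrableOn f (Set.Ico (1 / (N:ℝ)^t) 1) ∧
      ∫ x in Set.Ico (1 / (N:ℝ)^t) 1, f x = (1 - 1 / N) * ((A^t - 1) / (A - 1)) := by
    intro t
    induction t with
    | zero => intro _; simp
    | succ t ih =>
      intro ht
      have hst : 1 / (N:ℝ)^(t+1) ≤ 1 / (N:ℝ)^t := by
        gcongr
        · exact ha1.le
        · omega
      have hp := const_piece f (1 / (N:ℝ)^(t+1)) (1 / (N:ℝ)^t) (((N:ℝ)^t)^q) hst
        (fun x h0 h1 => by simp only [hf]; rw [max_outer N hN m t (by omega) x h0 h1])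
      have hg := glue f _ _ _ _ _ hst (hle1 t) hp (ih (by omega))
      refine ⟨hg.1, hg.2.trans ?_⟩
      rw [hpow]
      have : A - 1 ≠ 0 := by linarith
      field_simp
      ring
  have hp := const_piece f 0 (1 / (N:ℝ)^m) (((N:ℝ)^m)^q) (by positivity)
        (fun x h0 h1 => by simp only [hf]; rw [max_inner N hN m x h0 h1])
  have hg := glue f _ _ _ _ _ (by positivity) (hle1 m) hp (key m le_rfl)
  rw [hg.2, hpow, hNq, hmq]
  have h1 : A - 1 ≠ 0 := by linarith
  have h2 : A * N - N = (A - 1) * N := by ring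
  rw [h2]
  field_simp
  ring
end
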